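/- arXiv:1512.03946 — 5 statements merged into one kernel-verified Lean document; each statement's English description precedes it below -/
import Mathlib

section
/- (One-particle quantum energy inequality.) Let μ > 0 and λ₀ > 0. Let F_P be holomorphic on the strip {ζ ∈ ℂ : |Im ζ| < λ₀}, real-valued on ℝ, even (F_P(−ζ) = F_P(ζ)), with F_P(0) = 1, and suppose there exist θ₀ ≥ 0 and 0 < c < 1/2 such that |F_P(ζ)| ≤ c·cosh(Re ζ) whenever |Re ζ| ≥ θ₀ and |Im ζ| < λ₀. Then for every real-valued Schwartz function g on ℝ there exists a constant c_g > 0 such that for all smooth compactly supported φ : ℝ → ℂ one has Q(φ) ≥ −c_g·‖φ‖², where c_g depends on g and F_P but not on φ. -/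
/-!
Write `f` for `FP` on the real axis and `D = cosh θ - cosh η`. Since `G(μ D)` decays faster than any
power of `D`, the kernel `K(θ, η) = cosh²((θ + η)/2) f(θ - η)` matters only near `θ = η`, where it is
about `cosh² θ`, and near `θ = -η`, where it is about `f(2θ)`. Put `r(x) = f(2x) / cosh² x`. The
growth bound with `c < 1/2` gives `|r| ≤ 1` for large `x`, so the `2 × 2` matrix with diagonal
entries `1` and off-diagonal entries `r` is positive there; `crossRatio` truncates `r` to `[-1, 1]`.
Diagonalising this matrix in even and odd combinations suggests comparing `K` with

  `K₀(θ, η) = (A(θ) A(η) + B(θ) B(η)) / 2`,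
  `A(θ) = cosh θ √(1 + r(|θ|))`, `B(θ) = sgn θ cosh θ √(1 - r(|θ|))`.

The form with kernel `K₀ G` is nonnegative because `G` is the Fourier transform of the nonnegative
function `g²` (`fourierG_form_nonneg`). The difference satisfies
`|K - K₀| ≤ M (1 + |D|)⁴ min (cosh θ) (cosh η)` (`kernel_est`): `K` and `K₀` agree up to a bounded
error at `θ = ± η`, the functions `f` and `r` are Lipschitz with the right weights thanks to Cauchy's
estimate (`real_bounds`), and a factor `sinh (|θ| - |η|)` gains a power of `cosh θ` (`max_est`). With
the decay of `G`, the kernel `(K - K₀) G` is dominated by a multiple of `cosh η / (1 + D²)`, whose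
integral over `η` is bounded uniformly in `θ`, so Schur's test (`schur_bound`) bounds its form by a
multiple of `‖φ‖²`; `form_lower_bound` combines the two parts.
-/

open MeasureTheory

/-- Fourier transform of `g²`: `G(k) = ∫ g(t)² e^{ikt} dt`. -/
noncomputable def fourierG (g : ℝ → ℝ) (k : ℝ) : ℂ :=
  ∫ t : ℝ, ((g t : ℂ))^2 * Complex.exp (Complex.I * (k : ℂ) * (t : ℂ))

/-- One-particle energy density quadratic form
`Q(φ) = (μ²/(2π)) ∫∫ cosh²((θ+η)/2) F_P(θ−η) G(ω(θ)−ω(η)) conj(φ(θ)) φ(η) dθ dη`. -/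
noncomputable def Qform (μ : ℝ) (FP : ℝ → ℝ) (g : ℝ → ℝ) (φ : ℝ → ℂ) : ℂ :=
  ((μ ^ 2 / (2 * Real.pi) : ℝ) : ℂ) *
    ∫ θ : ℝ, ∫ η : ℝ,
      (((Real.cosh ((θ + η) / 2)) ^ 2 * FP (θ - η) : ℝ) : ℂ) *
        fourierG g (μ * Real.cosh θ - μ * Real.cosh η) *
        (starRingEnd ℂ) (φ θ) * φ η

/-! ### Elementary estimates for the kernel -/

/-- With `X = cosh x`, `Y = cosh y`, this follows from
`sinh (x - y) * sinh (x + y) = (X - Y) * (X + Y)` when `X ≤ 2 sinh x`; otherwise `X` is bounded. -/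
lemma cosh_mul_sinh_le {x y : ℝ} (hy : 0 ≤ y) (hyx : y ≤ x) :
    Real.cosh x * Real.sinh (x - y) ≤ 4 * (1 + (Real.cosh x - Real.cosh y)) ^ 2 := by
  have hx : 0 ≤ x := hy.trans hyx
  have hS : 0 ≤ Real.sinh x := Real.sinh_nonneg_iff.2 hx
  have hT : 0 ≤ Real.sinh y := Real.sinh_nonneg_iff.2 hy
  have hX := Real.one_le_cosh x
  have hY := Real.one_le_cosh y
  have hXY : Real.cosh y ≤ Real.cosh x := by
    rw [Real.cosh_le_cosh, abs_of_nonneg hx, abs_of_nonneg hy]; exact hyx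
  have hs : Real.sinh (x - y) = Real.sinh x * Real.cosh y - Real.cosh x * Real.sinh y :=
    Real.sinh_sub x y
  have h0 : 0 ≤ Real.sinh (x - y) := Real.sinh_nonneg_iff.2 (by linarith)
  have hsS : Real.sinh (x - y) ≤ Real.sinh x := Real.sinh_le_sinh.2 (by linarith)
  have i1 := Real.cosh_sq x
  have i2 := Real.cosh_sq y
  set X := Real.cosh x
  set Y := Real.cosh y
  set S := Real.sinh x
  set T := Real.sinh y
  set s := Real.sinh (x - y)
  by_cases h : X ≤ 2 * S
  · have key : s * (S * Y + X * T) = (X - Y) * (X + Y) := by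
      rw [hs]
      have : S ^ 2 = X ^ 2 - 1 := by linarith
      have h2 : T ^ 2 = Y ^ 2 - 1 := by linarith
      linear_combination Y ^ 2 * this - X ^ 2 * h2
    have h1 : (X * s) * Y ≤ 2 * ((X - Y) * (X + Y)) := by
      rw [← key]
      have : s * (X * Y) ≤ s * (2 * S * Y) := by gcongr
      have h3 : 0 ≤ s * (X * T) := by positivity
      nlinarith
    have h2 : 2 * ((X - Y) * (X + Y)) ≤ (4 * (1 + (X - Y)) ^ 2) * Y := by
      have hD : 0 ≤ X - Y := by linarith
      have : X + Y ≤ (2 + (X - Y)) * Y := by nlinarith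
      have h4 : (X - Y) * (X + Y) ≤ (X - Y) * ((2 + (X - Y)) * Y) := by gcongr
      have h5 : 0 ≤ (X - Y) * Y := by positivity
      nlinarith [mul_nonneg h5 hD]
    exact le_of_mul_le_mul_right (h1.trans h2) (by linarith)
  · push Not at h
    have : X * s ≤ 2 := by nlinarith
    nlinarith

/-- A factor `sinh |x - y|` is worth one inverse power of `max (cosh x) (cosh y)`, up to powers of
`cosh x - cosh y`, which the decay of `G` absorbs. -/
lemma max_est {x y : ℝ} (hx : 0 ≤ x) (hy : 0 ≤ y) :
    Real.cosh x * Real.sinh |x - y| ≤ 4 * (1 + |Real.cosh x - Real.cosh y|) ^ 2 ∧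
    Real.cosh y * Real.sinh |x - y| ≤ 4 * (1 + |Real.cosh x - Real.cosh y|) ^ 2 := by
  wlog h : y ≤ x generalizing x y
  · have := this hy hx (le_of_not_ge h)
    rw [abs_sub_comm y x, abs_sub_comm (Real.cosh y)] at this
    exact this.symm
  have hXY : Real.cosh y ≤ Real.cosh x := by
    rw [Real.cosh_le_cosh, abs_of_nonneg hx, abs_of_nonneg hy]; exact h
  rw [abs_of_nonneg (sub_nonneg.2 h), abs_of_nonneg (sub_nonneg.2 hXY)]
  have := cosh_mul_sinh_le hy h
  refine ⟨this, le_trans ?_ this⟩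
  have : 0 ≤ Real.sinh (x - y) := Real.sinh_nonneg_iff.2 (by linarith)
  gcongr

/-- The coefficients `√(1 ± r)` reproduce the values `1` and `r` on the diagonal, with Lipschitz
error. -/
lemma sqrt_est {r r' : ℝ} (h1 : |r| ≤ 1) (h1' : |r'| ≤ 1) :
    |(√(1 + r) * √(1 + r') + √(1 - r) * √(1 - r')) / 2 - 1| ≤ |r - r'| ∧
    |(√(1 + r) * √(1 + r') - √(1 - r) * √(1 - r')) / 2 - r| ≤ |r - r'| := by
  rw [abs_le] at h1 h1'
  have a2 := Real.sq_sqrt (show 0 ≤ 1 + r by linarith)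
  have a2' := Real.sq_sqrt (show 0 ≤ 1 + r' by linarith)
  have b2 := Real.sq_sqrt (show 0 ≤ 1 - r by linarith)
  have b2' := Real.sq_sqrt (show 0 ≤ 1 - r' by linarith)
  have ha := Real.sqrt_nonneg (1 + r)
  have ha' := Real.sqrt_nonneg (1 + r')
  have hb := Real.sqrt_nonneg (1 - r)
  have hb' := Real.sqrt_nonneg (1 - r')
  set a := √(1 + r)
  set a' := √(1 + r')
  set b' := √(1 - r')
  set b := √(1 - r)
  -- `a |a' - a| ≤ (a' + a) |a' - a| = |r' - r|`, so no lower bound on `a` is needed.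
  have ka : |a * (a' - a)| ≤ |r - r'| := by
    have : |r - r'| = (a + a') * |a' - a| := by
      rw [show r - r' = -((a + a') * (a' - a)) by nlinarith, abs_neg, abs_mul,
        abs_of_nonneg (by positivity : 0 ≤ a + a')]
    rw [this, abs_mul, abs_of_nonneg ha]
    gcongr; linarith
  have kb : |b * (b' - b)| ≤ |r - r'| := by
    have : |r - r'| = (b + b') * |b' - b| := by
      rw [show r - r' = ((b + b') * (b' - b)) by nlinarith, abs_mul,
        abs_of_nonneg (by positivity : 0 ≤ b + b')]
    rw [this, abs_mul, abs_of_nonneg hb]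
    gcongr; linarith
  rw [abs_le] at ka kb
  constructor <;> rw [abs_le] <;> constructor <;> nlinarith

/-- The ratio `f (2x) / cosh² x` of the kernel at `(x, -x)` to the kernel at `(x, x)`, truncated to
`[-1, 1]` so that `√(1 ± r)` is meaningful for all `x`. Under the growth hypothesis the truncation is
inactive for large `x`. -/
noncomputable def crossRatio (f : ℝ → ℝ) (x : ℝ) : ℝ :=
  max (-1) (min 1 (f (2 * x) / Real.cosh x ^ 2))

lemma abs_crossRatio_le (f : ℝ → ℝ) (x : ℝ) : |crossRatio f x| ≤ 1 := by
  rw [abs_le]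
  exact ⟨le_max_left _ _, max_le (by norm_num) (min_le_left _ _)⟩

lemma cosh_two_le (x : ℝ) : Real.cosh (2 * x) ≤ 2 * Real.cosh x ^ 2 := by
  rw [Real.cosh_two_mul, Real.sinh_sq]; linarith

lemma crossRatio_sub_le {f : ℝ → ℝ} {C : ℝ} (hC : 0 ≤ C) (hf : ∀ x, |f x| ≤ C * Real.cosh x)
    (hf' : ∀ x y, |f x - f y| ≤ C * Real.cosh (max |x| |y|) * |x - y|)
    {x y : ℝ} (hx : 0 ≤ x) (hy : 0 ≤ y) :
    |crossRatio f x - crossRatio f y| ≤ 8 * C * Real.sinh |x - y| := by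
  wlog h : y ≤ x generalizing x y
  · rw [abs_sub_comm, abs_sub_comm x]
    exact this hy hx (le_of_not_ge h)
  have h1 : |crossRatio f x - crossRatio f y| ≤
      |f (2 * x) / Real.cosh x ^ 2 - f (2 * y) / Real.cosh y ^ 2| := by
    unfold crossRatio
    refine (abs_max_sub_max_le_max _ _ _ _).trans ?_
    rw [sub_self, abs_zero]
    refine max_le (abs_nonneg _) ((abs_min_sub_min_le_max _ _ _ _).trans ?_)
    rw [sub_self, abs_zero]
    exact max_le (abs_nonneg _) le_rfl
  refine h1.trans ?_
  have hu : 0 ≤ x - y := sub_nonneg.2 h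
  rw [abs_of_nonneg hu]
  have hX := Real.one_le_cosh x
  have hY := Real.one_le_cosh y
  have hXY : Real.cosh y ≤ Real.cosh x := by
    rw [Real.cosh_le_cosh, abs_of_nonneg hx, abs_of_nonneg hy]; exact h
  have hs : x - y ≤ Real.sinh (x - y) := Real.self_le_sinh_iff.2 hu
  have hs0 : 0 ≤ Real.sinh (x - y) := hu.trans hs
  -- `cosh y = cosh x cosh u - sinh x sinh u` with `u = x - y`
  have hd : Real.cosh x - Real.cosh y ≤ Real.cosh x * Real.sinh (x - y) := by
    have e : Real.cosh y = Real.cosh x * Real.cosh (x - y) - Real.sinh x * Real.sinh (x - y) := by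
      rw [← Real.cosh_sub]; congr 1; ring
    have h2 : Real.sinh x * Real.sinh (x - y) ≤ Real.cosh x * Real.sinh (x - y) := by
      gcongr; exact (Real.sinh_lt_cosh x).le
    have h3 : Real.cosh x * 1 ≤ Real.cosh x * Real.cosh (x - y) := by
      gcongr; exact Real.one_le_cosh _
    linarith
  have hfx : |f (2 * x) - f (2 * y)| ≤ 4 * C * Real.cosh x ^ 2 * Real.sinh (x - y) := by
    have := hf' (2 * x) (2 * y)
    rw [abs_of_nonneg (by linarith : 0 ≤ 2 * x), abs_of_nonneg (by linarith : 0 ≤ 2 * y),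
      max_eq_left (by linarith), abs_of_nonneg (by linarith : 0 ≤ 2 * x - 2 * y)] at this
    refine this.trans ?_
    calc C * Real.cosh (2 * x) * (2 * x - 2 * y)
        ≤ C * (2 * Real.cosh x ^ 2) * (2 * Real.sinh (x - y)) := by
          gcongr
          · linarith
          · exact cosh_two_le x
          · linarith
      _ = _ := by ring
  have hfy : |f (2 * y)| ≤ 2 * C * Real.cosh y ^ 2 := by
    refine (hf _).trans ?_
    have := mul_le_mul_of_nonneg_left (cosh_two_le y) hC
    linarith
  set X := Real.cosh x
  set Y := Real.cosh y
  set s := Real.sinh (x - y)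
  have e : f (2 * x) / X ^ 2 - f (2 * y) / Y ^ 2
      = (f (2 * x) - f (2 * y)) / X ^ 2 - (f (2 * y) / Y ^ 2) * ((X - Y) * (X + Y) / X ^ 2) := by
    field_simp
    ring
  rw [e]
  have t1 : |(f (2 * x) - f (2 * y)) / X ^ 2| ≤ 4 * C * s := by
    rw [abs_div, abs_of_pos (by positivity : 0 < X ^ 2), div_le_iff₀ (by positivity)]
    linarith
  have t2 : |f (2 * y) / Y ^ 2| ≤ 2 * C := by
    rw [abs_div, abs_of_pos (by positivity : 0 < Y ^ 2), div_le_iff₀ (by positivity)]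
    linarith
  have t3 : |(X - Y) * (X + Y) / X ^ 2| ≤ 2 * s := by
    rw [abs_of_nonneg (by have := sub_nonneg.2 hXY; positivity), div_le_iff₀ (by positivity)]
    have : (X - Y) * (X + Y) ≤ (X * s) * (2 * X) := by
      gcongr
      linarith
    linarith
  calc _ ≤ |(f (2 * x) - f (2 * y)) / X ^ 2|
        + |(f (2 * y) / Y ^ 2) * ((X - Y) * (X + Y) / X ^ 2)| := abs_sub _ _
    _ ≤ 4 * C * s + 2 * C * (2 * s) := by rw [abs_mul]; gcongr
    _ = _ := by ring

/-- The truncation changes `f (2x)` only on a compact set, hence by a bounded amount. -/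
lemma crossRatio_diag {f : ℝ → ℝ} {C R : ℝ} (hC : 0 ≤ C) (hR : 0 ≤ R)
    (hf : ∀ x, |f x| ≤ C * Real.cosh x)
    (hfR : ∀ x, R ≤ x → |f (2 * x)| ≤ Real.cosh x ^ 2) {x : ℝ} (hx : 0 ≤ x) :
    |Real.cosh x ^ 2 * crossRatio f x - f (2 * x)| ≤ (1 + 2 * C) * Real.cosh R ^ 2 := by
  have hX := Real.one_le_cosh x
  rcases le_total R x with h | h
  · have h1 := hfR x h
    have h2 : |f (2 * x) / Real.cosh x ^ 2| ≤ 1 := by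
      rw [abs_div, abs_of_pos (by positivity : 0 < Real.cosh x ^ 2)]
      exact div_le_one_of_le₀ h1 (by positivity)
    rw [abs_le] at h2
    have h3 : crossRatio f x = f (2 * x) / Real.cosh x ^ 2 := by
      unfold crossRatio
      rw [min_eq_right h2.2, max_eq_right h2.1]
    rw [h3, mul_div_cancel₀ _ (by positivity), sub_self, abs_zero]
    positivity
  · have hXR : Real.cosh x ≤ Real.cosh R := by
      rw [Real.cosh_le_cosh, abs_of_nonneg hx, abs_of_nonneg hR]; exact h
    have hfy : |f (2 * x)| ≤ 2 * C * Real.cosh x ^ 2 := by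
      refine (hf _).trans ?_
      have := mul_le_mul_of_nonneg_left (cosh_two_le x) hC
      linarith
    calc _ ≤ |Real.cosh x ^ 2 * crossRatio f x| + |f (2 * x)| := abs_sub _ _
      _ ≤ Real.cosh x ^ 2 * 1 + 2 * C * Real.cosh x ^ 2 := by
        rw [abs_mul, abs_of_pos (by positivity : 0 < Real.cosh x ^ 2)]
        gcongr
        exact abs_crossRatio_le f x
      _ = (1 + 2 * C) * Real.cosh x ^ 2 := by ring
      _ ≤ _ := by gcongr

lemma cosh_le_mul (x y : ℝ) :
    Real.cosh x ≤ Real.cosh y * (1 + |Real.cosh x - Real.cosh y|) := by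
  have := le_abs_self (Real.cosh x - Real.cosh y)
  have := abs_nonneg (Real.cosh x - Real.cosh y)
  nlinarith [Real.one_le_cosh y]

lemma cosh_half_sq (u : ℝ) : Real.cosh (u / 2) ^ 2 = (Real.cosh u + 1) / 2 := by
  have := Real.cosh_two_mul (u / 2)
  rw [mul_div_cancel₀ u two_ne_zero, Real.sinh_sq] at this
  linarith

lemma cosh_sub_one_le (u : ℝ) : Real.cosh u - 1 ≤ Real.sinh |u| := by
  rw [← Real.cosh_abs]
  have := Real.cosh_sub_sinh |u|
  have : Real.exp (-|u|) ≤ 1 := Real.exp_le_one_iff.2 (by simp)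
  linarith

/-- Approximation of the kernel for rapidities of equal sign. On the diagonal both terms equal
`cosh² x`. -/
lemma est_same {f : ℝ → ℝ} {C : ℝ} (hC : 0 ≤ C) (hf0 : f 0 = 1)
    (hf : ∀ x, |f x| ≤ C * Real.cosh x)
    (hf' : ∀ x y, |f x - f y| ≤ C * Real.cosh (max |x| |y|) * |x - y|)
    {x y : ℝ} (hx : 0 ≤ x) (hy : 0 ≤ y) :
    |Real.cosh ((x + y) / 2) ^ 2 * f (x - y) - Real.cosh x * Real.cosh y *
      ((√(1 + crossRatio f x) * √(1 + crossRatio f y)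
        + √(1 - crossRatio f x) * √(1 - crossRatio f y)) / 2)|
      ≤ 56 * C * ((1 + |Real.cosh x - Real.cosh y|) ^ 4 * Real.cosh y) := by
  have hP := (sqrt_est (abs_crossRatio_le f x) (abs_crossRatio_le f y)).1.trans
    (crossRatio_sub_le hC hf hf' hx hy)
  set P := (√(1 + crossRatio f x) * √(1 + crossRatio f y)
        + √(1 - crossRatio f x) * √(1 - crossRatio f y)) / 2
  have hm := max_est hx hy
  have hu := cosh_sub_one_le (x - y)
  have hu1 := Real.one_le_cosh (x - y)
  have hfu := hf (x - y)
  have hfu' := hf' (x - y) 0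
  rw [hf0, sub_zero, abs_zero, max_eq_left (abs_nonneg _), Real.cosh_abs] at hfu'
  have hs : |x - y| ≤ Real.sinh |x - y| := Real.self_le_sinh_iff.2 (abs_nonneg _)
  have hX := Real.one_le_cosh x
  have hY := Real.one_le_cosh y
  have hprod : Real.cosh x * Real.cosh y = (Real.cosh (x + y) + Real.cosh (x - y)) / 2 := by
    rw [Real.cosh_add, Real.cosh_sub]; ring
  have hcu : Real.cosh (x - y) ≤ Real.cosh x * Real.cosh y := by
    rw [Real.cosh_sub]
    have := mul_nonneg (Real.sinh_nonneg_iff.2 hx) (Real.sinh_nonneg_iff.2 hy)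
    linarith
  rw [cosh_half_sq]
  have hD := abs_nonneg (Real.cosh x - Real.cosh y)
  set D := |Real.cosh x - Real.cosh y|
  set X := Real.cosh x
  set Y := Real.cosh y
  set w := Real.cosh (x - y)
  set s := Real.sinh |x - y|
  have hs0 : 0 ≤ s := (abs_nonneg _).trans hs
  have hs4 : s ≤ 4 * (1 + D) ^ 2 := le_trans (by nlinarith) hm.1
  have hw : w ≤ 5 * (1 + D) ^ 2 := by nlinarith
  have hXYs : X * Y * s ≤ 4 * (1 + D) ^ 2 * Y := by nlinarith
  have e : (Real.cosh (x + y) + 1) / 2 * f (x - y) - X * Y * P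
      = -((w - 1) / 2 * f (x - y)) + X * Y * (f (x - y) - 1) - X * Y * (P - 1) := by
    linear_combination (-f (x-y)) * hprod
  rw [e]
  have t1 : |(w - 1) / 2 * f (x - y)| ≤ C * (X * Y * s) := by
    rw [abs_mul, abs_of_nonneg (by linarith)]
    calc (w - 1) / 2 * |f (x - y)| ≤ s * (C * (X * Y)) := by
          gcongr
          · linarith
          · exact hfu.trans (by gcongr)
      _ = _ := by ring
  have t2 : |X * Y * (f (x - y) - 1)| ≤ C * (w * (X * Y * s)) := by
    rw [abs_mul, abs_of_nonneg (by positivity)]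
    calc X * Y * |f (x - y) - 1| ≤ X * Y * (C * w * s) := by
          gcongr
          exact hfu'.trans (by gcongr)
      _ = _ := by ring
  have t3 : |X * Y * (P - 1)| ≤ 8 * C * (X * Y * s) := by
    rw [abs_mul, abs_of_nonneg (by positivity)]
    calc X * Y * |P - 1| ≤ X * Y * (8 * C * s) := by gcongr
      _ = _ := by ring
  calc _ ≤ |(w - 1) / 2 * f (x - y)| + |X * Y * (f (x - y) - 1)| + |X * Y * (P - 1)| := by
        refine (abs_sub _ _).trans ?_
        gcongr
        refine (abs_add_le _ _).trans ?_
        rw [abs_neg]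
    _ ≤ C * (X * Y * s) + C * (w * (X * Y * s)) + 8 * C * (X * Y * s) := by gcongr
    _ ≤ C * (4 * (1 + D) ^ 2 * Y) + C * (5 * (1 + D) ^ 2 * (4 * (1 + D) ^ 2 * Y))
        + 8 * C * (4 * (1 + D) ^ 2 * Y) := by gcongr
    _ = 36 * (C * ((1 + D) ^ 2 * Y)) + 20 * C * ((1 + D) ^ 4 * Y) := by ring
    _ ≤ 36 * (C * ((1 + D) ^ 4 * Y)) + 20 * C * ((1 + D) ^ 4 * Y) := by
        gcongr
        · linarith
        · norm_num
    _ = _ := by ring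

/-- Approximation of the kernel for rapidities `x` and `-y` of opposite sign. For large `x = y` both
terms equal `f (2x)`. -/
lemma est_opp {f : ℝ → ℝ} {C R : ℝ} (hC : 0 ≤ C) (hR : 0 ≤ R)
    (hf : ∀ x, |f x| ≤ C * Real.cosh x)
    (hf' : ∀ x y, |f x - f y| ≤ C * Real.cosh (max |x| |y|) * |x - y|)
    (hfR : ∀ x, R ≤ x → |f (2 * x)| ≤ Real.cosh x ^ 2)
    {x y : ℝ} (hx : 0 ≤ x) (hy : 0 ≤ y) :
    |Real.cosh ((x - y) / 2) ^ 2 * f (x + y) - Real.cosh x * Real.cosh y *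
      ((√(1 + crossRatio f x) * √(1 + crossRatio f y)
        - √(1 - crossRatio f x) * √(1 - crossRatio f y)) / 2)|
      ≤ (52 * C + (1 + 2 * C) * Real.cosh R ^ 2 + 1) *
        ((1 + |Real.cosh x - Real.cosh y|) ^ 4 * Real.cosh y) := by
  have hP := (sqrt_est (abs_crossRatio_le f x) (abs_crossRatio_le f y)).2.trans
    (crossRatio_sub_le hC hf hf' hx hy)
  have hdiag := crossRatio_diag hC hR hf hfR hx
  have hr := abs_crossRatio_le f x
  set P := (√(1 + crossRatio f x) * √(1 + crossRatio f y)
        - √(1 - crossRatio f x) * √(1 - crossRatio f y)) / 2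
  set r := crossRatio f x
  have hm := max_est hx hy
  have hu := cosh_sub_one_le (x - y)
  have hu1 := Real.one_le_cosh (x - y)
  have hfu := hf (x + y)
  have hfu' := hf' (x + y) (2 * x)
  have hs : |x - y| ≤ Real.sinh |x - y| := Real.self_le_sinh_iff.2 (abs_nonneg _)
  have hX := Real.one_le_cosh x
  have hY := Real.one_le_cosh y
  have hXY1 := cosh_le_mul x y
  have hcu : Real.cosh (x + y) ≤ 2 * (Real.cosh x * Real.cosh y) := by
    rw [Real.cosh_add]
    have := mul_le_mul (Real.sinh_lt_cosh x).le (Real.sinh_lt_cosh y).le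
      (Real.sinh_nonneg_iff.2 hy) (by linarith)
    linarith
  have hmax : Real.cosh (max |x + y| |2 * x|) ≤ 2 * (Real.cosh x ^ 2 + Real.cosh y ^ 2) := by
    rcases max_choice |x + y| |2 * x| with h | h <;> rw [h, Real.cosh_abs]
    · nlinarith [sq_nonneg (Real.cosh x - Real.cosh y)]
    · nlinarith [cosh_two_le x]
  rw [show x + y - 2 * x = -(x - y) by ring, abs_neg] at hfu'
  rw [cosh_half_sq]
  have hD := abs_nonneg (Real.cosh x - Real.cosh y)
  set D := |Real.cosh x - Real.cosh y| with hDD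
  set X := Real.cosh x
  set Y := Real.cosh y
  set w := Real.cosh (x - y)
  set s := Real.sinh |x - y|
  set M := (1 + 2 * C) * Real.cosh R ^ 2
  have hM : 0 ≤ M := by positivity
  have hs0 : 0 ≤ s := (abs_nonneg _).trans hs
  have hXYs : X * Y * s ≤ 4 * (1 + D) ^ 2 * Y := by nlinarith
  have hYYs : Y ^ 2 * s ≤ 4 * (1 + D) ^ 2 * Y := by nlinarith
  have hXXs : X ^ 2 * s ≤ 4 * (1 + D) ^ 3 * Y := by
    calc X ^ 2 * s = (X * s) * X := by ring
      _ ≤ (4 * (1 + D) ^ 2) * (Y * (1 + D)) := mul_le_mul hm.1 hXY1 (by linarith) (by positivity)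
      _ = _ := by ring
  have e : (w + 1) / 2 * f (x + y) - X * Y * P
      = (w - 1) / 2 * f (x + y) + (f (x + y) - f (2 * x)) - (X ^ 2 * r - f (2 * x))
        + X * (X - Y) * r - X * Y * (P - r) := by
    ring
  rw [e]
  have t1 : |(w - 1) / 2 * f (x + y)| ≤ C * (X * Y * s) := by
    rw [abs_mul, abs_of_nonneg (by linarith)]
    calc (w - 1) / 2 * |f (x + y)| ≤ (s / 2) * (C * (2 * (X * Y))) := by
          gcongr
          exact hfu.trans (by gcongr)
      _ = _ := by ring
  have t2 : |f (x + y) - f (2 * x)| ≤ 2 * C * (X ^ 2 * s) + 2 * C * (Y ^ 2 * s) := by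
    calc _ ≤ C * (2 * (X ^ 2 + Y ^ 2)) * s := hfu'.trans (by gcongr)
      _ = _ := by ring
  have t3 : |X * (X - Y) * r| ≤ Y * (1 + D) * D := by
    rw [abs_mul, abs_mul, ← hDD, abs_of_nonneg (by positivity : 0 ≤ X)]
    calc X * D * |r| ≤ X * D * 1 := by gcongr
      _ ≤ Y * (1 + D) * D := by rw [mul_one]; gcongr
  have t4 : |X * Y * (P - r)| ≤ 8 * C * (X * Y * s) := by
    rw [abs_mul, abs_of_nonneg (by positivity)]
    calc X * Y * |P - r| ≤ X * Y * (8 * C * s) := by gcongr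
      _ = _ := by ring
  have p2 : (1 + D) ^ 2 ≤ (1 + D) ^ 4 := pow_le_pow_right₀ (by linarith) (by norm_num)
  have p3 : (1 + D) ^ 3 ≤ (1 + D) ^ 4 := pow_le_pow_right₀ (by linarith) (by norm_num)
  have p0 : 1 ≤ (1 + D) ^ 4 := one_le_pow₀ (by linarith)
  have p1 : (1 + D) * D ≤ (1 + D) ^ 4 := le_trans (by nlinarith only [hD]) p2
  have hT : 1 ≤ (1 + D) ^ 4 * Y := one_le_mul_of_one_le_of_one_le p0 hY
  calc _ ≤ |(w - 1) / 2 * f (x + y)| + |f (x + y) - f (2 * x)| + |X ^ 2 * r - f (2 * x)|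
          + |X * (X - Y) * r| + |X * Y * (P - r)| := by
        refine (abs_sub _ _).trans ?_
        gcongr
        refine (abs_add_le _ _).trans ?_
        gcongr
        refine (abs_sub _ _).trans ?_
        gcongr
        exact abs_add_le _ _
    _ ≤ C * (X * Y * s) + (2 * C * (X ^ 2 * s) + 2 * C * (Y ^ 2 * s)) + M
          + Y * (1 + D) * D + 8 * C * (X * Y * s) := by gcongr
    _ ≤ C * (4 * (1 + D) ^ 2 * Y) + (2 * C * (4 * (1 + D) ^ 3 * Y)
          + 2 * C * (4 * (1 + D) ^ 2 * Y)) + M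
          + Y * (1 + D) * D + 8 * C * (4 * (1 + D) ^ 2 * Y) := by gcongr
    _ = 44 * C * ((1 + D) ^ 2 * Y) + 8 * C * ((1 + D) ^ 3 * Y) + M * 1
          + ((1 + D) * D) * Y := by ring
    _ ≤ 44 * C * ((1 + D) ^ 4 * Y) + 8 * C * ((1 + D) ^ 4 * Y) + M * ((1 + D) ^ 4 * Y)
          + (1 + D) ^ 4 * Y := by gcongr
    _ = _ := by ring

/-! ### The Fourier transform `G` and the growth of `FP` on the real axis -/

/-- `g²` as a complex-valued Schwartz function. -/
noncomputable def sqSchwartz (g : SchwartzMap ℝ ℝ) : SchwartzMap ℝ ℂ :=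
  (SchwartzMap.pairing (ContinuousLinearMap.mul ℝ ℝ) g g).postcompCLM Complex.ofRealCLM

lemma sqSchwartz_apply (g : SchwartzMap ℝ ℝ) (t : ℝ) : sqSchwartz g t = (g t : ℂ) ^ 2 := by
  simp [sqSchwartz, sq]

open FourierTransform in
lemma fourierG_eq (g : SchwartzMap ℝ ℝ) (k : ℝ) :
    fourierG g k = (𝓕 (sqSchwartz g) : SchwartzMap ℝ ℂ) (-k / (2 * Real.pi)) := by
  rw [SchwartzMap.fourier_coe, Real.fourier_eq', fourierG]
  refine integral_congr_ae (Filter.Eventually.of_forall fun t => ?_)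
  simp only [sqSchwartz_apply, smul_eq_mul, mul_comm (((g t : ℂ)) ^ 2)]
  congr 2
  simp only [RCLike.inner_apply, conj_trivial]
  push_cast
  have : (Real.pi : ℂ) ≠ 0 := by exact_mod_cast Real.pi_ne_zero
  field_simp

lemma continuous_fourierG (g : SchwartzMap ℝ ℝ) : Continuous (fourierG g) := by
  rw [funext (fourierG_eq g)]
  exact (SchwartzMap.continuous _).comp (by fun_prop)

open FourierTransform in
/-- `G` decays faster than any power, being the Fourier transform of a Schwartz function. -/
lemma fourierG_decay (g : SchwartzMap ℝ ℝ) {μ : ℝ} (hμ : 0 < μ) (n : ℕ) :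
    ∃ C, 0 < C ∧ ∀ k : ℝ, (1 + |k|) ^ n * ‖fourierG g (μ * k)‖ ≤ C := by
  set h := (𝓕 (sqSchwartz g) : SchwartzMap ℝ ℂ)
  obtain ⟨B, hB⟩ : ∃ B, ∀ x : ℝ, (1 + ‖x‖) ^ n * ‖h x‖ ≤ B := by
    refine ⟨2 ^ n * ((Finset.Iic (n, 0)).sup fun m => SchwartzMap.seminorm ℝ m.1 m.2) h,
      fun x => ?_⟩
    simpa using SchwartzMap.one_add_le_sup_seminorm_apply (𝕜 := ℝ) (m := (n, 0)) (k := n) (n := 0)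
      le_rfl le_rfl h x
  set A := 1 + 2 * Real.pi / μ
  have hA : 0 < A := by have := Real.pi_pos; positivity
  have hB0 : 0 ≤ B := le_trans (by positivity) (hB 0)
  refine ⟨A ^ n * B + 1, by positivity, fun k => ?_⟩
  rw [fourierG_eq]
  have key : 1 + |k| ≤ A * (1 + ‖-(μ * k) / (2 * Real.pi)‖) := by
    have hp := Real.pi_pos
    rw [Real.norm_eq_abs, abs_div, abs_neg, abs_mul, abs_of_pos hμ,
      abs_of_pos (by positivity : 0 < 2 * Real.pi)]
    have : A * (1 + μ * |k| / (2 * Real.pi)) =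
        1 + |k| + 2 * Real.pi / μ + μ * |k| / (2 * Real.pi) := by
      simp only [A]; field_simp; ring
    rw [this]
    have : 0 ≤ 2 * Real.pi / μ + μ * |k| / (2 * Real.pi) := by positivity
    linarith
  calc (1 + |k|) ^ n * ‖h (-(μ * k) / (2 * Real.pi))‖
      ≤ (A * (1 + ‖-(μ * k) / (2 * Real.pi)‖)) ^ n * ‖h (-(μ * k) / (2 * Real.pi))‖ := by gcongr
    _ = A ^ n * ((1 + ‖-(μ * k) / (2 * Real.pi)‖) ^ n * ‖h (-(μ * k) / (2 * Real.pi))‖) := by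
        rw [mul_pow]; ring
    _ ≤ A ^ n * B := by gcongr; exact hB _
    _ ≤ _ := by linarith

lemma strip_bound {lam₀ : ℝ} (hlam₀ : 0 < lam₀) {FP : ℂ → ℂ}
    (hol : DifferentiableOn ℂ FP {ζ : ℂ | |ζ.im| < lam₀})
    {θ₀ c : ℝ} (hc : c < 1 / 2)
    (hbound : ∀ ζ : ℂ, θ₀ ≤ |ζ.re| → |ζ.im| < lam₀ → ‖FP ζ‖ ≤ c * Real.cosh ζ.re) :
    ∃ B, 0 < B ∧ ∀ ζ : ℂ, |ζ.im| ≤ lam₀ / 2 → ‖FP ζ‖ ≤ B * Real.cosh ζ.re := by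
  have hK : IsCompact (Set.Icc (-θ₀) θ₀ ×ℂ Set.Icc (-(lam₀ / 2)) (lam₀ / 2)) :=
    isCompact_Icc.reProdIm isCompact_Icc
  have hcont : ContinuousOn FP (Set.Icc (-θ₀) θ₀ ×ℂ Set.Icc (-(lam₀ / 2)) (lam₀ / 2)) := by
    refine hol.continuousOn.mono fun ζ hζ => ?_
    have := abs_le.2 (Complex.mem_reProdIm.1 hζ).2
    exact lt_of_le_of_lt this (by linarith)
  obtain ⟨B, hB⟩ := hK.exists_bound_of_continuousOn hcont
  refine ⟨max B 1, by positivity, fun ζ hζ => ?_⟩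
  have h1 := Real.one_le_cosh ζ.re
  rcases le_total θ₀ |ζ.re| with h | h
  · refine (hbound ζ h (by linarith)).trans ?_
    gcongr
    exact le_trans (by linarith) (le_max_right B 1)
  · have := hB ζ (Complex.mem_reProdIm.2 ⟨abs_le.1 h, abs_le.1 hζ⟩)
    have h2 := le_max_left B 1
    have h3 := le_max_right B 1
    nlinarith

/-- On the real axis `FP` and, by Cauchy's estimate on discs inside the strip, its derivative are
`O(cosh x)`; the second bound is stated as a local Lipschitz estimate. -/
lemma real_bounds {lam₀ : ℝ} (hlam₀ : 0 < lam₀) {FP : ℂ → ℂ}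
    (hol : DifferentiableOn ℂ FP {ζ : ℂ | |ζ.im| < lam₀})
    {θ₀ c : ℝ} (hc : c < 1 / 2)
    (hbound : ∀ ζ : ℂ, θ₀ ≤ |ζ.re| → |ζ.im| < lam₀ → ‖FP ζ‖ ≤ c * Real.cosh ζ.re) :
    ∃ C, 0 < C ∧ (∀ x : ℝ, |(FP x).re| ≤ C * Real.cosh x) ∧
      (∀ x y : ℝ, |(FP x).re - (FP y).re| ≤ C * Real.cosh (max |x| |y|) * |x - y|) := by
  obtain ⟨B, hB0, hB⟩ := strip_bound hlam₀ hol hc hbound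
  have hopen : IsOpen {ζ : ℂ | |ζ.im| < lam₀} :=
    isOpen_lt (by fun_prop) continuous_const
  set ρ := min (lam₀ / 2) 1
  have hρ : 0 < ρ := by positivity
  have hsub : ∀ x : ℝ, ∀ ζ ∈ Metric.closedBall (x : ℂ) ρ, |ζ.im| ≤ lam₀ / 2 ∧ |ζ.re - x| ≤ 1 := by
    intro x ζ hζ
    rw [mem_closedBall_iff_norm] at hζ
    constructor
    · have := Complex.abs_im_le_norm (ζ - x)
      simp only [Complex.sub_im, Complex.ofReal_im, sub_zero] at this
      exact this.trans (hζ.trans (min_le_left _ _))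
    · have := Complex.abs_re_le_norm (ζ - x)
      simp only [Complex.sub_re, Complex.ofReal_re] at this
      exact this.trans (hζ.trans (min_le_right _ _))
  have hcosh : ∀ x u : ℝ, |u - x| ≤ 1 → Real.cosh u ≤ 2 * Real.cosh 1 * Real.cosh x := by
    intro x u h
    have e : Real.cosh u
        = Real.cosh x * Real.cosh (u - x) + Real.sinh x * Real.sinh (u - x) := by
      rw [← Real.cosh_add]; congr 1; ring
    have h1 : Real.cosh (u - x) ≤ Real.cosh 1 := by
      rw [Real.cosh_le_cosh, abs_one]; exact h
    have h2 : Real.sinh x * Real.sinh (u - x) ≤ Real.cosh x * Real.cosh (u - x) := by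
      have := (Real.cosh_sub x (u - x)).symm ▸ Real.cosh_pos (x - (u - x))
      linarith
    have h3 : Real.cosh x * Real.cosh (u - x) ≤ Real.cosh x * Real.cosh 1 := by gcongr
    linarith
  -- Cauchy's estimate on the disc of radius `ρ`
  have hder : ∀ x : ℝ, ‖deriv FP x‖ ≤ B * (2 * Real.cosh 1 * Real.cosh x) / ρ := by
    intro x
    refine Complex.norm_deriv_le_of_forall_mem_sphere_norm_le hρ ?_ fun ζ hζ => ?_
    · exact hol.diffContOnCl_ball fun ζ hζ => lt_of_le_of_lt (hsub x ζ hζ).1 (by linarith)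
    · have := hsub x ζ (Metric.sphere_subset_closedBall hζ)
      refine (hB ζ this.1).trans ?_
      gcongr
      exact hcosh x _ this.2
  refine ⟨B + 2 * B * Real.cosh 1 / ρ, by positivity, fun x => ?_, fun x y => ?_⟩
  · refine (Complex.abs_re_le_norm _).trans ?_
    have := hB x (by simp; positivity)
    rw [Complex.ofReal_re] at this
    refine this.trans ?_
    gcongr
    have : 0 ≤ 2 * B * Real.cosh 1 / ρ := by positivity
    linarith
  · set m := max |x| |y|
    have hd : ∀ u ∈ Set.Icc (-m) m,
        HasDerivWithinAt (fun u : ℝ => (FP u).re) (deriv FP u).re (Set.Icc (-m) m) u := by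
      intro u _
      have h1 : DifferentiableAt ℂ FP u :=
        hol.differentiableAt (hopen.mem_nhds (by simpa using hlam₀))
      exact h1.hasDerivAt.real_of_complex.hasDerivWithinAt
    have hb : ∀ u ∈ Set.Icc (-m) m,
        ‖(deriv FP u).re‖ ≤ (B + 2 * B * Real.cosh 1 / ρ) * Real.cosh m := by
      intro u hu
      refine (Complex.abs_re_le_norm _).trans ((hder u).trans ?_)
      have hm0 : 0 ≤ m := (abs_nonneg x).trans (le_max_left _ _)
      have hum : Real.cosh u ≤ Real.cosh m := by
        rw [Real.cosh_le_cosh, abs_of_nonneg hm0]; exact abs_le.2 hu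
      calc B * (2 * Real.cosh 1 * Real.cosh u) / ρ
          = (0 + 2 * B * Real.cosh 1 / ρ) * Real.cosh u := by ring
        _ ≤ _ := by gcongr
    have := (convex_Icc (-m) m).norm_image_sub_le_of_norm_hasDerivWithin_le hd hb
      (abs_le.1 (le_max_right _ _) : y ∈ Set.Icc (-m) m)
      (abs_le.1 (le_max_left _ _) : x ∈ Set.Icc (-m) m)
    simpa [Real.norm_eq_abs] using this

/-! ### Positivity of the form with kernel `G` -/

lemma integrable_fourierG_form (g : SchwartzMap ℝ ℝ) {ω : ℝ → ℝ} (hω : Continuous ω) {ψ : ℝ → ℂ}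
    (hψ : Integrable ψ) :
    Integrable (fun z : ℝ × ℝ =>
      fourierG g (ω z.1 - ω z.2) * ((starRingEnd ℂ) (ψ z.1) * ψ z.2)) := by
  obtain ⟨C, -, hC⟩ := fourierG_decay g one_pos 0
  have hc : Integrable (fun θ => (starRingEnd ℂ) (ψ θ)) :=
    (LinearIsometryEquiv.integrable_comp_iff Complex.conjLIE).2 hψ
  refine (hc.mul_prod hψ).bdd_mul (c := C) ?_ (Filter.Eventually.of_forall fun z => ?_)
  · exact ((continuous_fourierG g).comp (by fun_prop)).aestronglyMeasurable
  · simpa using hC (ω z.1 - ω z.2)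

/-- `G` is of positive type: by Fubini the form equals `∫ g(t)² ‖∫ ψ(η) e^{-iω(η)t} dη‖² dt`. -/
lemma fourierG_form_nonneg (g : SchwartzMap ℝ ℝ) {ω : ℝ → ℝ} (hω : Continuous ω) {ψ : ℝ → ℂ}
    (hψ : Integrable ψ) :
    0 ≤ (∫ z : ℝ × ℝ,
      fourierG g (ω z.1 - ω z.2) * ((starRingEnd ℂ) (ψ z.1) * ψ z.2)).re := by
  have hc : Integrable (fun θ => (starRingEnd ℂ) (ψ θ)) :=
    (LinearIsometryEquiv.integrable_comp_iff Complex.conjLIE).2 hψ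
  set T : ℝ × ℝ → ℝ → ℂ := fun z t =>
    Complex.exp (Complex.I * ((ω z.1 - ω z.2 : ℝ) : ℂ) * (t : ℂ)) *
      (((starRingEnd ℂ) (ψ z.1) * ψ z.2) * sqSchwartz g t) with hT
  have hTint : Integrable (Function.uncurry T) ((volume : Measure (ℝ × ℝ)).prod volume) := by
    refine (Integrable.mul_prod (hc.mul_prod hψ) (sqSchwartz g).integrable).bdd_mul (c := 1) ?_
      (Filter.Eventually.of_forall fun z => ?_)
    · refine Continuous.aestronglyMeasurable ?_
      fun_prop
    · rw [mul_assoc, ← Complex.ofReal_mul, mul_comm, Complex.norm_exp_ofReal_mul_I]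
  have h1 : ∀ z : ℝ × ℝ, fourierG g (ω z.1 - ω z.2) * ((starRingEnd ℂ) (ψ z.1) * ψ z.2)
      = ∫ t, T z t := by
    intro z
    rw [fourierG, ← integral_mul_const]
    congr 1
    ext t
    simp only [hT, sqSchwartz_apply]
    ring
  have h2 : ∀ t : ℝ, ∫ z : ℝ × ℝ, T z t = ((g t ^ 2 *
      ‖∫ η, ψ η * Complex.exp (-(Complex.I * (ω η : ℂ) * (t : ℂ)))‖ ^ 2 : ℝ) : ℂ) := by
    intro t
    set V := ∫ η, ψ η * Complex.exp (-(Complex.I * (ω η : ℂ) * (t : ℂ))) with hV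
    have hVc : (starRingEnd ℂ) V =
        ∫ θ, (starRingEnd ℂ) (ψ θ) * Complex.exp (Complex.I * (ω θ : ℂ) * (t : ℂ)) := by
      rw [hV, ← integral_conj]
      congr 1
      ext θ
      rw [map_mul, ← Complex.exp_conj]
      simp
    have : ∀ z : ℝ × ℝ, T z t = sqSchwartz g t *
        (((starRingEnd ℂ) (ψ z.1) * Complex.exp (Complex.I * (ω z.1 : ℂ) * (t : ℂ))) *
          (ψ z.2 * Complex.exp (-(Complex.I * (ω z.2 : ℂ) * (t : ℂ))))) := by
      intro z
      have e : Complex.exp (Complex.I * ((ω z.1 - ω z.2 : ℝ) : ℂ) * (t : ℂ)) =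
          Complex.exp (Complex.I * (ω z.1 : ℂ) * (t : ℂ)) *
          Complex.exp (-(Complex.I * (ω z.2 : ℂ) * (t : ℂ))) := by
        rw [← Complex.exp_add]
        congr 1
        push_cast
        ring
      simp only [hT, e]
      ring
    simp_rw [this]
    rw [integral_const_mul, Measure.volume_eq_prod, integral_prod_mul
      (fun θ => (starRingEnd ℂ) (ψ θ) * Complex.exp (Complex.I * (ω θ : ℂ) * (t : ℂ)))
      (fun η => ψ η * Complex.exp (-(Complex.I * (ω η : ℂ) * (t : ℂ)))), ← hVc, ← hV,
      mul_comm ((starRingEnd ℂ) V), Complex.mul_conj, Complex.normSq_eq_norm_sq, sqSchwartz_apply]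
    push_cast
    rfl
  simp_rw [h1]
  rw [integral_integral_swap hTint]
  simp_rw [h2]
  rw [integral_complex_ofReal, Complex.ofReal_re]
  exact integral_nonneg fun t => by positivity

/-! ### Schur's test -/

lemma tendsto_cosh_atTop : Filter.Tendsto Real.cosh Filter.atTop Filter.atTop := by
  refine Filter.tendsto_atTop_mono' _ ?_ Filter.tendsto_id
  filter_upwards [Filter.eventually_ge_atTop 0] with x hx
  exact (Real.self_le_sinh_iff.2 hx).trans (Real.sinh_lt_cosh x).le

/-- The Schur weight has integrals bounded uniformly in `X`: off `[-1, 1]` one has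
`cosh η ≤ 2 sinh |η|`, and `sinh η / (1 + (X - cosh η)²)` is the derivative of
`arctan (cosh η - X)`. -/
lemma weight_integrable (X : ℝ) :
    Integrable (fun η : ℝ => Real.cosh η / (1 + (X - Real.cosh η) ^ 2)) ∧
    ∫ η : ℝ, Real.cosh η / (1 + (X - Real.cosh η) ^ 2) ≤ 2 * Real.cosh 1 + 4 * Real.pi := by
  set k : ℝ → ℝ := fun η => Real.sinh η / (1 + (X - Real.cosh η) ^ 2) with hk
  have hder : ∀ x ∈ Set.Ici (0 : ℝ),
      HasDerivAt (fun x => Real.arctan (Real.cosh x - X)) (k x) x := by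
    intro x _
    have := ((Real.hasDerivAt_cosh x).sub_const X).arctan
    convert this using 1
    rw [hk]
    ring
  have hpos : ∀ x ∈ Set.Ioi (0 : ℝ), 0 ≤ k x := fun x hx => by
    have := Real.sinh_nonneg_iff.2 (le_of_lt hx)
    simp only [hk]
    positivity
  have hlim : Filter.Tendsto (fun x => Real.arctan (Real.cosh x - X)) Filter.atTop
      (nhds (Real.pi / 2)) := by
    refine (Real.tendsto_arctan_atTop.mono_right nhdsWithin_le_nhds).comp ?_
    exact Filter.tendsto_atTop_add_const_right _ _ tendsto_cosh_atTop
  have hIoi : IntegrableOn k (Set.Ioi 0) := integrableOn_Ioi_deriv_of_nonneg' hder hpos hlim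
  have hval : ∫ x in Set.Ioi (0 : ℝ), k x ≤ Real.pi := by
    rw [integral_Ioi_of_hasDerivAt_of_nonneg' hder hpos hlim]
    have := Real.neg_pi_div_two_lt_arctan (Real.cosh 0 - X)
    linarith
  have habs : Integrable (fun η => k |η|) := by
    have hIoi' : IntegrableOn (fun η => k |η|) (Set.Ioi 0) :=
      hIoi.congr_fun (fun x hx => by rw [abs_of_pos hx]) measurableSet_Ioi
    have hIic : IntegrableOn (fun η => k |η|) (Set.Iic 0) := by
      rw [← Measure.map_neg_eq_self (volume : Measure ℝ)]
      have m : MeasurableEmbedding fun x : ℝ => -x := (Homeomorph.neg ℝ).measurableEmbedding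
      rw [m.integrableOn_map_iff]
      simp_rw [Function.comp_def, abs_neg, Set.neg_preimage, Set.neg_Iic, neg_zero]
      exact Iff.mpr integrableOn_Ici_iff_integrableOn_Ioi hIoi'
    rw [← integrableOn_univ, ← Set.Iic_union_Ioi (a := (0 : ℝ))]
    exact hIic.union hIoi'
  have habsval : ∫ η, k |η| ≤ 2 * Real.pi := by
    rw [integral_comp_abs]; linarith
  set b : ℝ → ℝ := fun η => (Set.Icc (-1 : ℝ) 1).indicator (fun _ => Real.cosh 1) η + 2 * k |η|
  have hind : Integrable ((Set.Icc (-1 : ℝ) 1).indicator (fun _ => Real.cosh 1)) :=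
    (integrable_indicator_iff measurableSet_Icc).2 (by simp)
  have hb : Integrable b := hind.add (habs.const_mul 2)
  have hle : ∀ η, Real.cosh η / (1 + (X - Real.cosh η) ^ 2) ≤ b η := by
    intro η
    have hk0 : 0 ≤ k |η| := by
      have := Real.sinh_nonneg_iff.2 (abs_nonneg η)
      simp only [hk]
      positivity
    by_cases h : η ∈ Set.Icc (-1 : ℝ) 1
    · simp only [b, Set.indicator_of_mem h]
      have h1 : Real.cosh η ≤ Real.cosh 1 := by
        rw [Real.cosh_le_cosh, abs_one]; exact abs_le.2 h
      have h2 : Real.cosh η / (1 + (X - Real.cosh η) ^ 2) ≤ Real.cosh η :=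
        div_le_self (Real.cosh_pos _).le (by nlinarith [sq_nonneg (X - Real.cosh η)])
      linarith
    · simp only [b, Set.indicator_of_notMem h, zero_add, hk, Real.cosh_abs]
      rw [← mul_div_assoc]
      gcongr
      have h1 : 1 ≤ |η| := by
        by_contra! h'
        exact h (abs_le.1 h'.le)
      have h2 : 1 ≤ Real.sinh |η| := h1.trans (Real.self_le_sinh_iff.2 (abs_nonneg _))
      have h3 := cosh_sub_one_le η
      linarith
  have hint : Integrable (fun η : ℝ => Real.cosh η / (1 + (X - Real.cosh η) ^ 2)) := by
    refine hb.mono' ?_ (Filter.Eventually.of_forall fun η => ?_)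
    · refine Continuous.aestronglyMeasurable ?_
      refine Real.continuous_cosh.div (by fun_prop) fun x => by positivity
    · rw [Real.norm_of_nonneg (by have := Real.cosh_pos η; positivity)]
      exact hle η
  refine ⟨hint, (integral_mono hint hb hle).trans ?_⟩
  rw [integral_add hind (habs.const_mul 2), integral_const_mul,
    integral_indicator measurableSet_Icc]
  have : ∫ _ in Set.Icc (-1 : ℝ) 1, Real.cosh 1 = 2 * Real.cosh 1 := by
    simp; norm_num
  linarith

/-- Schur's test for the weight `cosh η / (1 + (cosh θ - cosh η)²)`. -/
lemma schur_bound {C : ℝ} (hC : 0 ≤ C) {E : ℝ × ℝ → ℂ}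
    (hE : ∀ z, ‖E z‖ ≤ C * (Real.cosh z.2 / (1 + (Real.cosh z.1 - Real.cosh z.2) ^ 2)))
    (hE' : ∀ z, ‖E z‖ ≤ C * (Real.cosh z.1 / (1 + (Real.cosh z.2 - Real.cosh z.1) ^ 2)))
    {φ : ℝ → ℂ} (hφ : Continuous φ) (hφs : HasCompactSupport φ) :
    ‖∫ z : ℝ × ℝ, E z * ((starRingEnd ℂ) (φ z.1) * φ z.2)‖ ≤
      C * (2 * Real.cosh 1 + 4 * Real.pi) * ∫ θ, ‖φ θ‖ ^ 2 := by
  set B := 2 * Real.cosh 1 + 4 * Real.pi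
  set w : ℝ × ℝ → ℝ := fun z =>
    ‖φ z.1‖ ^ 2 * (Real.cosh z.2 / (1 + (Real.cosh z.1 - Real.cosh z.2) ^ 2)) with hw
  have hw0 : ∀ z, 0 ≤ w z := fun z => by
    have := Real.cosh_pos z.2
    simp only [hw]; positivity
  have hwc : Continuous w := by
    refine Continuous.mul (by fun_prop) (Continuous.div ?_ ?_ fun x => by positivity)
    · exact Real.continuous_cosh.comp continuous_snd
    · have h1 := Real.continuous_cosh.comp (continuous_fst (X := ℝ) (Y := ℝ))
      have h2 := Real.continuous_cosh.comp (continuous_snd (X := ℝ) (Y := ℝ))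
      exact continuous_const.add ((h1.sub h2).pow 2)
  have hφ2 : Integrable (fun θ => ‖φ θ‖ ^ 2) := by
    refine Continuous.integrable_of_hasCompactSupport (by fun_prop) ?_
    exact hφs.comp_left (g := fun v : ℂ => ‖v‖ ^ 2) (by simp)
  have hinner : ∀ θ, ∫ η, w (θ, η) ≤ B * ‖φ θ‖ ^ 2 := fun θ => by
    simp only [hw]
    rw [integral_const_mul, mul_comm]
    gcongr
    exact (weight_integrable (Real.cosh θ)).2
  have hwm : AEStronglyMeasurable w ((volume : Measure ℝ).prod volume) := hwc.aestronglyMeasurable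
  have hwi : Integrable w ((volume : Measure ℝ).prod volume) := by
    rw [integrable_prod_iff hwm]
    refine ⟨Filter.Eventually.of_forall fun θ => ?_, ?_⟩
    · exact (weight_integrable (Real.cosh θ)).1.const_mul (‖φ θ‖ ^ 2)
    · refine (hφ2.const_mul B).mono' hwm.norm.integral_prod_right'
        (Filter.Eventually.of_forall fun θ => ?_)
      rw [Real.norm_of_nonneg (integral_nonneg fun _ => norm_nonneg _)]
      simp_rw [Real.norm_of_nonneg (hw0 _)]
      exact hinner θ
  have hwval : ∫ z, w z ∂((volume : Measure ℝ).prod volume) ≤ B * ∫ θ, ‖φ θ‖ ^ 2 := by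
    rw [integral_prod _ hwi, ← integral_const_mul]
    exact integral_mono hwi.integral_prod_left (hφ2.const_mul B) hinner
  have hws : Integrable (fun z : ℝ × ℝ => w z.swap) ((volume : Measure ℝ).prod volume) := hwi.swap
  have hbd : ∀ z : ℝ × ℝ, ‖E z * ((starRingEnd ℂ) (φ z.1) * φ z.2)‖ ≤
      C / 2 * (w z + w z.swap) := by
    intro z
    rw [norm_mul, norm_mul, RCLike.norm_conj]
    have h1 : ‖E z‖ * ‖φ z.1‖ ^ 2 ≤ C * w z := by
      have := mul_le_mul_of_nonneg_right (hE z) (sq_nonneg ‖φ z.1‖)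
      simp only [hw]; linarith
    have h2 : ‖E z‖ * ‖φ z.2‖ ^ 2 ≤ C * w z.swap := by
      have := mul_le_mul_of_nonneg_right (hE' z) (sq_nonneg ‖φ z.2‖)
      simp only [hw, Prod.fst_swap, Prod.snd_swap]; linarith
    have h3 := mul_nonneg (norm_nonneg (E z)) (sq_nonneg (‖φ z.1‖ - ‖φ z.2‖))
    nlinarith
  have hsum : Integrable (fun z : ℝ × ℝ => C / 2 * (w z + w z.swap))
      ((volume : Measure ℝ).prod volume) := (hwi.add hws).const_mul _
  refine (norm_integral_le_of_norm_le hsum (Filter.Eventually.of_forall hbd)).trans ?_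
  rw [integral_const_mul, integral_add hwi hws, integral_prod_swap]
  have := mul_le_mul_of_nonneg_left hwval hC
  linarith

/-! ### The approximating positive kernel and the inequality -/

/-- The sign of `θ`, with the value `1` at `0`, so that `θ = sgn θ * |θ|` and `sgn θ ^ 2 = 1`. -/
noncomputable def sgn (θ : ℝ) : ℝ := if 0 ≤ θ then 1 else -1

/-- The amplitude `cosh θ √(1 + r)`, `r = crossRatio f |θ|`; it pairs with the even part of `φ`. -/
noncomputable def evenAmp (f : ℝ → ℝ) (θ : ℝ) : ℝ := Real.cosh θ * √(1 + crossRatio f |θ|)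

/-- The amplitude `sgn θ cosh θ √(1 - r)`, `r = crossRatio f |θ|`; it pairs with the odd part of
`φ`. -/
noncomputable def oddAmp (f : ℝ → ℝ) (θ : ℝ) : ℝ :=
  sgn θ * Real.cosh θ * √(1 - crossRatio f |θ|)

/-- The kernel `cosh² ((θ + η) / 2) f (θ - η)` differs from a sum of two rank-one kernels by an amount
which is polynomial in `cosh θ - cosh η` up to a single factor `cosh η`. The cases of equal and of
opposite signs of `θ` and `η` are `est_same` and `est_opp` at `|θ|` and `|η|`. -/
lemma kernel_est {f : ℝ → ℝ} {C R : ℝ} (hC : 0 ≤ C) (hR : 0 ≤ R) (hf0 : f 0 = 1)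
    (heven : ∀ x, f (-x) = f x)
    (hf : ∀ x, |f x| ≤ C * Real.cosh x)
    (hf' : ∀ x y, |f x - f y| ≤ C * Real.cosh (max |x| |y|) * |x - y|)
    (hfR : ∀ x, R ≤ x → |f (2 * x)| ≤ Real.cosh x ^ 2) (θ η : ℝ) :
    |Real.cosh ((θ + η) / 2) ^ 2 * f (θ - η)
        - (evenAmp f θ * evenAmp f η + oddAmp f θ * oddAmp f η) / 2|
      ≤ (56 * C + (1 + 2 * C) * Real.cosh R ^ 2 + 1) *
        ((1 + |Real.cosh θ - Real.cosh η|) ^ 4 * Real.cosh η) := by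
  have hs := est_same hC hf0 hf hf' (abs_nonneg θ) (abs_nonneg η)
  have ho := est_opp hC hR hf hf' hfR (abs_nonneg θ) (abs_nonneg η)
  rw [Real.cosh_abs, Real.cosh_abs] at hs ho
  set T := (1 + |Real.cosh θ - Real.cosh η|) ^ 4 * Real.cosh η
  have hT : 0 ≤ T := by have := Real.cosh_pos η; positivity
  have hs' := hs.trans (b := _) (c := (56 * C + (1 + 2 * C) * Real.cosh R ^ 2 + 1) * T) (by
    gcongr
    have : 0 ≤ (1 + 2 * C) * Real.cosh R ^ 2 := by positivity
    linarith)
  have ho' := ho.trans (b := _) (c := (56 * C + (1 + 2 * C) * Real.cosh R ^ 2 + 1) * T) (by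
    gcongr
    norm_num)
  unfold evenAmp oddAmp sgn
  rcases le_or_gt 0 θ with h1 | h1 <;> rcases le_or_gt 0 η with h2 | h2
  · rw [if_pos h1, if_pos h2]
    rw [abs_of_nonneg h1, abs_of_nonneg h2] at hs' ⊢
    refine le_of_eq_of_le (congrArg abs ?_) hs'
    ring
  · rw [if_pos h1, if_neg (not_le.2 h2)]
    rw [abs_of_nonneg h1, abs_of_neg h2] at ho' ⊢
    rw [sub_neg_eq_add, ← sub_eq_add_neg] at ho'
    refine le_of_eq_of_le (congrArg abs ?_) ho'
    ring
  · rw [if_neg (not_le.2 h1), if_pos h2]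
    rw [abs_of_neg h1, abs_of_nonneg h2] at ho' ⊢
    rw [show -θ + η = -(θ - η) by ring, heven,
      show (-θ - η) / 2 = -((θ + η) / 2) by ring, Real.cosh_neg] at ho'
    refine le_of_eq_of_le (congrArg abs ?_) ho'
    ring
  · rw [if_neg (not_le.2 h1), if_neg (not_le.2 h2)]
    rw [abs_of_neg h1, abs_of_neg h2] at hs' ⊢
    rw [show -θ - -η = -(θ - η) by ring, heven,
      show (-θ + -η) / 2 = -((θ + η) / 2) by ring, Real.cosh_neg] at hs'
    refine le_of_eq_of_le (congrArg abs ?_) hs'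
    ring

lemma measurable_crossRatio {f : ℝ → ℝ} (hf : Continuous f) : Measurable (crossRatio f) := by
  unfold crossRatio
  have : Continuous fun x => f (2 * x) / Real.cosh x ^ 2 :=
    (hf.comp (by fun_prop)).div (by fun_prop) fun x => by positivity
  exact (continuous_const.max (continuous_const.min this)).measurable

lemma measurable_evenAmp {f : ℝ → ℝ} (hf : Continuous f) : Measurable (evenAmp f) := by
  unfold evenAmp
  exact Real.continuous_cosh.measurable.mul
    ((measurable_const.add ((measurable_crossRatio hf).comp measurable_id.abs)).sqrt)

lemma measurable_oddAmp {f : ℝ → ℝ} (hf : Continuous f) : Measurable (oddAmp f) := by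
  unfold oddAmp sgn
  exact ((Measurable.ite measurableSet_Ici measurable_const measurable_const).mul
    Real.continuous_cosh.measurable).mul
    ((measurable_const.sub ((measurable_crossRatio hf).comp measurable_id.abs)).sqrt)

lemma abs_evenAmp_le (f : ℝ → ℝ) (θ : ℝ) : |evenAmp f θ| ≤ 2 * Real.cosh θ := by
  have h := abs_le.1 (abs_crossRatio_le f |θ|)
  have hc := Real.cosh_pos θ
  have : √(1 + crossRatio f |θ|) ≤ 2 := Real.sqrt_le_iff.2 ⟨by norm_num, by linarith⟩
  rw [evenAmp, abs_mul, abs_of_pos hc, abs_of_nonneg (Real.sqrt_nonneg _), mul_comm]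
  gcongr

lemma abs_oddAmp_le (f : ℝ → ℝ) (θ : ℝ) : |oddAmp f θ| ≤ 2 * Real.cosh θ := by
  have h := abs_le.1 (abs_crossRatio_le f |θ|)
  have hc := Real.cosh_pos θ
  have : √(1 - crossRatio f |θ|) ≤ 2 := Real.sqrt_le_iff.2 ⟨by norm_num, by linarith⟩
  have hs : |sgn θ| = 1 := by unfold sgn; split_ifs <;> simp
  rw [oddAmp, abs_mul, abs_mul, hs, one_mul, abs_of_pos hc, abs_of_nonneg (Real.sqrt_nonneg _),
    mul_comm]
  gcongr

lemma integrable_amp_mul {A : ℝ → ℝ} (hA : Measurable A) (hA' : ∀ θ, |A θ| ≤ 2 * Real.cosh θ)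
    {φ : ℝ → ℂ} (hφ : Continuous φ) (hφs : HasCompactSupport φ) :
    Integrable (fun θ => (A θ : ℂ) * φ θ) := by
  have h : Integrable (fun θ => (2 * Real.cosh θ) * ‖φ θ‖) := by
    refine Continuous.integrable_of_hasCompactSupport ?_ ?_
    · exact (continuous_const.mul Real.continuous_cosh).mul hφ.norm
    · exact hφs.norm.mul_left
  refine h.mono' ?_ (Filter.Eventually.of_forall fun θ => ?_)
  · exact (Complex.measurable_ofReal.comp hA).aestronglyMeasurable.mul hφ.aestronglyMeasurable
  · rw [norm_mul, Complex.norm_real, Real.norm_eq_abs]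
    gcongr
    exact hA' θ

/-- If a continuous kernel `K` differs from the sum of rank-one kernels `(A ⊗ A + B ⊗ B) / 2` by an
amount that, multiplied by `G`, passes Schur's test, then the form with kernel `K G` is bounded below
by `-‖φ‖²` up to a constant, because the forms of `A ⊗ A` and `B ⊗ B` are nonnegative. -/
lemma form_lower_bound (g : SchwartzMap ℝ ℝ) {ω : ℝ → ℝ} (hω : Continuous ω)
    {K : ℝ × ℝ → ℝ} (hK : Continuous K) {A B : ℝ → ℝ} (hA : Measurable A) (hB : Measurable B)
    (hA' : ∀ θ, |A θ| ≤ 2 * Real.cosh θ) (hB' : ∀ θ, |B θ| ≤ 2 * Real.cosh θ)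
    {T : ℝ} (hT : 0 ≤ T)
    (hE : ∀ z : ℝ × ℝ, ‖((K z - (A z.1 * A z.2 + B z.1 * B z.2) / 2 : ℝ) : ℂ) *
        fourierG g (ω z.1 - ω z.2)‖ ≤
      T * (Real.cosh z.2 / (1 + (Real.cosh z.1 - Real.cosh z.2) ^ 2)))
    (hE' : ∀ z : ℝ × ℝ, ‖((K z - (A z.1 * A z.2 + B z.1 * B z.2) / 2 : ℝ) : ℂ) *
        fourierG g (ω z.1 - ω z.2)‖ ≤
      T * (Real.cosh z.1 / (1 + (Real.cosh z.2 - Real.cosh z.1) ^ 2)))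
    {φ : ℝ → ℂ} (hφ : Continuous φ) (hφs : HasCompactSupport φ) :
    Integrable (fun z : ℝ × ℝ =>
        ((K z : ℝ) : ℂ) * fourierG g (ω z.1 - ω z.2) * (starRingEnd ℂ) (φ z.1) * φ z.2) ∧
      -(T * (2 * Real.cosh 1 + 4 * Real.pi) * ∫ θ, ‖φ θ‖ ^ 2) ≤
        (∫ z : ℝ × ℝ,
          ((K z : ℝ) : ℂ) * fourierG g (ω z.1 - ω z.2) * (starRingEnd ℂ) (φ z.1) * φ z.2).re := by
  have hAi := integrable_amp_mul hA hA' hφ hφs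
  have hBi := integrable_amp_mul hB hB' hφ hφs
  have hAf := integrable_fourierG_form g hω hAi
  have hBf := integrable_fourierG_form g hω hBi
  have hAp := fourierG_form_nonneg g hω hAi
  have hBp := fourierG_form_nonneg g hω hBi
  have hEb := schur_bound hT hE hE' hφ hφs
  have hKi : Integrable (fun z : ℝ × ℝ =>
      ((K z : ℝ) : ℂ) * fourierG g (ω z.1 - ω z.2) * (starRingEnd ℂ) (φ z.1) * φ z.2) := by
    have hcompact := hφs.isCompact.prod hφs.isCompact
    have hΓc : Continuous fun z : ℝ × ℝ => fourierG g (ω z.1 - ω z.2) :=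
      (continuous_fourierG g).comp ((hω.comp continuous_fst).sub (hω.comp continuous_snd))
    refine Continuous.integrable_of_hasCompactSupport ?_ (HasCompactSupport.intro hcompact ?_)
    · exact (((Complex.continuous_ofReal.comp hK).mul hΓc).mul
        (Complex.continuous_conj.comp (hφ.comp continuous_fst))).mul (hφ.comp continuous_snd)
    · intro z hz
      rw [Set.mem_prod, not_and_or] at hz
      rcases hz with hz | hz <;> simp [image_eq_zero_of_notMem_tsupport hz]
  refine ⟨hKi, ?_⟩
  have hsplit : (∫ z : ℝ × ℝ, ((K z - (A z.1 * A z.2 + B z.1 * B z.2) / 2 : ℝ) : ℂ) *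
        fourierG g (ω z.1 - ω z.2) * ((starRingEnd ℂ) (φ z.1) * φ z.2)) =
      (∫ z : ℝ × ℝ,
        ((K z : ℝ) : ℂ) * fourierG g (ω z.1 - ω z.2) * (starRingEnd ℂ) (φ z.1) * φ z.2)
      - ((1 / 2 : ℝ) : ℂ) * ((∫ z : ℝ × ℝ, fourierG g (ω z.1 - ω z.2) *
            ((starRingEnd ℂ) ((A z.1 : ℂ) * φ z.1) * ((A z.2 : ℂ) * φ z.2)))
          + ∫ z : ℝ × ℝ, fourierG g (ω z.1 - ω z.2) *
            ((starRingEnd ℂ) ((B z.1 : ℂ) * φ z.1) * ((B z.2 : ℂ) * φ z.2))) := by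
    rw [← integral_add hAf hBf, ← integral_const_mul]
    refine Eq.trans ?_ (integral_sub hKi ((hAf.add hBf).const_mul _))
    refine integral_congr_ae (Filter.Eventually.of_forall fun z => ?_)
    simp only [map_mul, Complex.conj_ofReal]
    push_cast
    ring
  have hre := (abs_le.1 ((Complex.abs_re_le_norm _).trans hEb)).1
  rw [hsplit, Complex.sub_re, Complex.re_ofReal_mul, Complex.add_re] at hre
  linarith

/-- One-particle quantum energy inequality: if `F_P` is holomorphic on the strip
`|Im ζ| < lam₀`, real on `ℝ`, even, `F_P(0) = 1`, and `|F_P(ζ)| ≤ c·cosh(Re ζ)` with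
`c < 1/2` for `|Re ζ| ≥ θ₀`, then for every real Schwartz `g` the form `Q` is bounded
below by `−c_g‖φ‖²` uniformly in `φ`. -/
theorem one_particle_QEI
    (μ lam₀ : ℝ) (hμ : 0 < μ) (hlam₀ : 0 < lam₀)
    (FP : ℂ → ℂ)
    (hol : DifferentiableOn ℂ FP {ζ : ℂ | |ζ.im| < lam₀})
    (hreal : ∀ x : ℝ, (FP x).im = 0)
    (heven : ∀ ζ : ℂ, FP (-ζ) = FP ζ)
    (hone : FP 0 = 1)
    (θ₀ c : ℝ) (hθ₀ : 0 ≤ θ₀) (hc0 : 0 < c) (hc : c < 1 / 2)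
    (hbound : ∀ ζ : ℂ, θ₀ ≤ |ζ.re| → |ζ.im| < lam₀ → ‖FP ζ‖ ≤ c * Real.cosh ζ.re)
    (g : SchwartzMap ℝ ℝ) :
    ∃ cg : ℝ, 0 < cg ∧
      ∀ φ : ℝ → ℂ, ContDiff ℝ (⊤ : ℕ∞) φ → HasCompactSupport φ →
        -(cg * ∫ θ : ℝ, ‖φ θ‖ ^ 2) ≤ (Qform μ (fun θ : ℝ => (FP θ).re) (⇑g) φ).re := by
  obtain ⟨C, hC, hf, hf'⟩ := real_bounds hlam₀ hol hc hbound
  set f : ℝ → ℝ := fun θ => (FP θ).re with hfdef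
  have hfc : Continuous f := by
    refine Complex.continuous_re.comp (hol.continuousOn.comp_continuous Complex.continuous_ofReal ?_)
    intro x
    simpa using hlam₀
  have hf0 : f 0 = 1 := by simp [hfdef, hone]
  have hfe : ∀ x, f (-x) = f x := fun x => by simp [hfdef, heven]
  -- `|f (2x)| ≤ c cosh 2x ≤ 2c cosh² x`
  have hfR : ∀ x, θ₀ ≤ x → |f (2 * x)| ≤ Real.cosh x ^ 2 := by
    intro x hx
    have h1 := hbound ((2 * x : ℝ) : ℂ)
      (by rw [Complex.ofReal_re, abs_of_nonneg (by linarith)]; linarith) (by simpa using hlam₀)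
    rw [Complex.ofReal_re] at h1
    have h2 := cosh_two_le x
    have h3 := Real.cosh_pos (2 * x)
    refine (Complex.abs_re_le_norm _).trans (h1.trans ?_)
    nlinarith
  obtain ⟨N, hN, hG⟩ := fourierG_decay g hμ 6
  set M := 56 * C + (1 + 2 * C) * Real.cosh θ₀ ^ 2 + 1
  have hM : 0 < M := by positivity
  set A := evenAmp f
  set B := oddAmp f
  set K : ℝ × ℝ → ℝ := fun z => Real.cosh ((z.1 + z.2) / 2) ^ 2 * f (z.1 - z.2) with hK
  have hEgen : ∀ (z : ℝ × ℝ) (Y : ℝ), 0 < Y →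
      |K z - (A z.1 * A z.2 + B z.1 * B z.2) / 2|
        ≤ M * ((1 + |Real.cosh z.1 - Real.cosh z.2|) ^ 4 * Y) →
      ‖((K z - (A z.1 * A z.2 + B z.1 * B z.2) / 2 : ℝ) : ℂ) *
        fourierG g (μ * Real.cosh z.1 - μ * Real.cosh z.2)‖ ≤
        M * N * (Y / (1 + (Real.cosh z.1 - Real.cosh z.2) ^ 2)) := by
    intro z Y hY h1
    have h2 := hG (Real.cosh z.1 - Real.cosh z.2)
    rw [mul_sub] at h2
    simp only [norm_mul, Complex.norm_real, Real.norm_eq_abs]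
    have hD := abs_nonneg (Real.cosh z.1 - Real.cosh z.2)
    rw [← sq_abs (Real.cosh z.1 - Real.cosh z.2)]
    set D := |Real.cosh z.1 - Real.cosh z.2|
    rw [← mul_div_assoc, le_div_iff₀ (by positivity)]
    calc _ ≤ (M * ((1 + D) ^ 4 * Y)) *
          ‖fourierG g (μ * Real.cosh z.1 - μ * Real.cosh z.2)‖ * (1 + D) ^ 2 := by
          gcongr
          nlinarith
      _ = M * Y * ((1 + D) ^ 6 * ‖fourierG g (μ * Real.cosh z.1 - μ * Real.cosh z.2)‖) := by ring
      _ ≤ M * Y * N := by gcongr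
      _ = _ := by ring
  have hE : ∀ z, ‖((K z - (A z.1 * A z.2 + B z.1 * B z.2) / 2 : ℝ) : ℂ) *
        fourierG g (μ * Real.cosh z.1 - μ * Real.cosh z.2)‖ ≤
      M * N * (Real.cosh z.2 / (1 + (Real.cosh z.1 - Real.cosh z.2) ^ 2)) := fun z =>
    hEgen z _ (Real.cosh_pos _) (kernel_est hC.le hθ₀ hf0 hfe hf hf' hfR z.1 z.2)
  have hE' : ∀ z, ‖((K z - (A z.1 * A z.2 + B z.1 * B z.2) / 2 : ℝ) : ℂ) *
        fourierG g (μ * Real.cosh z.1 - μ * Real.cosh z.2)‖ ≤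
      M * N * (Real.cosh z.1 / (1 + (Real.cosh z.2 - Real.cosh z.1) ^ 2)) := by
    intro z
    rw [← neg_sub (Real.cosh z.1), neg_sq]
    refine hEgen z _ (Real.cosh_pos _) ?_
    have h := kernel_est hC.le hθ₀ hf0 hfe hf hf' hfR z.2 z.1
    rw [abs_sub_comm (Real.cosh z.2)] at h
    refine le_of_eq_of_le (congrArg abs ?_) h
    simp only [hK]
    rw [← neg_sub z.2 z.1, hfe, add_comm z.1]
    ring
  have hω : Continuous fun θ => μ * Real.cosh θ := continuous_const.mul Real.continuous_cosh
  have hKc : Continuous K := by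
    refine Continuous.mul ?_ (hfc.comp (by fun_prop))
    exact (Real.continuous_cosh.comp (by fun_prop)).pow 2
  refine ⟨μ ^ 2 / (2 * Real.pi) * (M * N * (2 * Real.cosh 1 + 4 * Real.pi)),
    by have := Real.pi_pos; positivity, fun φ hφ hφs => ?_⟩
  obtain ⟨hKi, hlow⟩ := form_lower_bound g hω hKc (measurable_evenAmp hfc) (measurable_oddAmp hfc)
    (abs_evenAmp_le f) (abs_oddAmp_le f) (by positivity) hE hE' hφ.continuous hφs
  rw [Measure.volume_eq_prod] at hKi hlow
  rw [integral_prod _ hKi] at hlow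
  rw [Qform, Complex.re_ofReal_mul, mul_assoc, ← mul_neg]
  exact mul_le_mul_of_nonneg_left hlow (by have := Real.pi_pos; positivity)
end

section
/- (Existence of one-particle states with negative energy density.) Let μ > 0 and let F_P : ℝ → ℝ be continuous and even with F_P(0) = 1. Suppose there exists θ_P ∈ ℝ such that |F_P(θ_P)| > 1. Then there exist a smooth compactly supported function φ : ℝ → ℂ and a real-valued Schwartz function g on ℝ such that Q(φ) < 0. -/
/-!
The kernel of `Q` at a pair of rapidities `x, y` is, up to the positive prefactor, the symmetric
matrix with diagonal entries `cosh² x · G(0)`, `cosh² y · G(0)` and off-diagonal entries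
`cosh²((x+y)/2) · F_P(x-y) · G(ω(x)-ω(y))`. Take `x - y = θ_P`. As `x + y → ∞` the quotient
`cosh x cosh y / cosh²((x+y)/2)` tends to `1`, so since `|F_P(θ_P)| > 1` it can be made smaller
than `|F_P(θ_P)|` (`exists_rapidity`). If `g` is supported close enough to `0`, then
`Re G(ω(x)-ω(y)) / G(0)` is as close to `1` as needed (`exists_sampling`), and the `2 × 2` matrix
then has negative determinant, hence a direction in which it is negative: explicitly
`(cosh y, -sign F_P(θ_P) · cosh x)`.

A superposition of two narrow bumps at `x` and `y` with these weights makes the integrated form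
negative (`kernel_neg`). All functions used are real, so only the real part of the kernel matters
(`Qform_re`).
-/

open MeasureTheory

/-- A continuous kernel whose `2 × 2` restriction to the points `x, y` is negative at `(a, b)` gives
an integral form that is negative at some real test function. -/
theorem kernel_neg (K : ℝ × ℝ → ℝ) (hK : Continuous K) (x y a b : ℝ)
    (h : a * a * K (x, x) + a * b * K (x, y) + b * a * K (y, x) + b * b * K (y, y) < 0) :
    ∃ φ : ℝ → ℝ, ContDiff ℝ (⊤ : ℕ∞) φ ∧ HasCompactSupport φ ∧
      ∫ p : ℝ × ℝ, K p * φ p.1 * φ p.2 < 0 := by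
  -- After translating each of the four bump products back to the origin, the form becomes the
  -- integral of `M p * (ψ p.1 * ψ p.2)`, and `M` is negative near `0` by continuity.
  set M : ℝ × ℝ → ℝ := fun p => a * a * K (p + (x, x)) + a * b * K (p + (x, y))
    + b * a * K (p + (y, x)) + b * b * K (p + (y, y)) with hM
  have hMc : Continuous M := by fun_prop
  have hM0 : M (0, 0) < 0 := by simpa [hM] using h
  obtain ⟨ε, hε, hball⟩ := Metric.isOpen_iff.1 (isOpen_Iio.preimage hMc : IsOpen (M ⁻¹' Set.Iio 0))
    (0, 0) hM0
  let ψ : ContDiffBump (0 : ℝ) := ⟨ε / 2, ε, by positivity, by linarith⟩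
  have hψc : Continuous ψ := ψ.continuous
  have hcs (s : ℝ) : HasCompactSupport fun t => ψ (t - s) := by
    simpa [sub_eq_add_neg, Function.comp_def] using
      ψ.hasCompactSupport.comp_homeomorph (Homeomorph.addRight (-s))
  have hcs2 (s t : ℝ) : HasCompactSupport fun p : ℝ × ℝ => ψ (p.1 - s) * ψ (p.2 - t) := by
    refine HasCompactSupport.intro ((hcs s).isCompact.prod (hcs t).isCompact) ?_
    rintro ⟨u, v⟩ huv
    by_contra hne
    have h1 : ψ (u - s) ≠ 0 := left_ne_zero_of_mul hne
    have h2 : ψ (v - t) ≠ 0 := right_ne_zero_of_mul hne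
    exact huv ⟨subset_tsupport _ h1, subset_tsupport _ h2⟩
  refine ⟨fun t => a * ψ (t - x) + b * ψ (t - y), ?_, ?_, ?_⟩
  · have := ψ.contDiff (n := ((⊤ : ℕ∞)))
    fun_prop
  · exact ((hcs x).mul_left (f := fun _ => a)).add ((hcs y).mul_left (f := fun _ => b))
  have hint (s t : ℝ) : Integrable fun p : ℝ × ℝ => K p * (ψ (p.1 - s) * ψ (p.2 - t)) :=
    Continuous.integrable_of_hasCompactSupport (by fun_prop) ((hcs2 s t).mul_left)
  have htr (s t : ℝ) : ∫ p : ℝ × ℝ, K p * (ψ (p.1 - s) * ψ (p.2 - t))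
      = ∫ p : ℝ × ℝ, K (p + (s, t)) * (ψ p.1 * ψ p.2) := by
    rw [← integral_add_right_eq_self _ (s, t)]
    simp
  have hint' (s t : ℝ) : Integrable fun p : ℝ × ℝ => K (p + (s, t)) * (ψ p.1 * ψ p.2) := by
    have := (hint s t).comp_add_right (s, t)
    simpa using this
  have e1 : ∫ p : ℝ × ℝ, K p * (a * ψ (p.1 - x) + b * ψ (p.1 - y)) *
      (a * ψ (p.2 - x) + b * ψ (p.2 - y)) = ∫ p : ℝ × ℝ, M p * (ψ p.1 * ψ p.2) := by
    calc _ = ∫ p : ℝ × ℝ, (a * a * (K p * (ψ (p.1 - x) * ψ (p.2 - x)))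
          + a * b * (K p * (ψ (p.1 - x) * ψ (p.2 - y)))
          + b * a * (K p * (ψ (p.1 - y) * ψ (p.2 - x)))
          + b * b * (K p * (ψ (p.1 - y) * ψ (p.2 - y)))) := by
            congr 1; ext p; ring
      _ = ∫ p : ℝ × ℝ, (a * a * (K (p + (x, x)) * (ψ p.1 * ψ p.2))
          + a * b * (K (p + (x, y)) * (ψ p.1 * ψ p.2))
          + b * a * (K (p + (y, x)) * (ψ p.1 * ψ p.2))
          + b * b * (K (p + (y, y)) * (ψ p.1 * ψ p.2))) := by
            rw [integral_add (by fun_prop) (by fun_prop), integral_add (by fun_prop) (by fun_prop),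
              integral_add (by fun_prop) (by fun_prop), integral_add (by fun_prop) (by fun_prop),
              integral_add (by fun_prop) (by fun_prop), integral_add (by fun_prop) (by fun_prop)]
            simp only [integral_const_mul, htr]
      _ = _ := by congr 1; ext p; simp only [hM]; ring
  rw [e1, ← neg_pos, ← integral_neg]
  have hc0 := hcs2 0 0
  simp only [sub_zero] at hc0
  refine Continuous.integral_pos_of_hasCompactSupport_nonneg_nonzero (x := (0, 0)) (by fun_prop)
    (hc0.mul_left (f := M)).neg ?_ ?_
  · rintro ⟨u, v⟩
    by_cases hu : |u| < ε
    · by_cases hv : |v| < ε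
      · have : M (u, v) < 0 := hball (by simp [Prod.dist_eq, hu, hv])
        have h1 := ψ.nonneg' u
        have h2 := ψ.nonneg' v
        have := mul_nonneg h1 h2
        simp only [Pi.zero_apply]
        nlinarith
      · have : ψ v = 0 := ψ.zero_of_le_dist (by simpa using hv)
        simp [this]
    · have : ψ u = 0 := ψ.zero_of_le_dist (by simpa using hu)
      simp [this]
  · have : ψ 0 = 1 := ψ.one_of_mem_closedBall (by simp; exact ψ.rIn_pos.le)
    simp only [this]
    simpa using hM0.ne

theorem fourierG_re (g : ℝ → ℝ) (hg : Continuous g) (hgc : HasCompactSupport g) (k : ℝ) :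
    (fourierG g k).re = ∫ t, g t ^ 2 * Real.cos (k * t) := by
  have hi : Integrable fun t : ℝ => ((g t : ℂ))^2 * Complex.exp (Complex.I * (k : ℂ) * (t : ℂ)) := by
    refine Continuous.integrable_of_hasCompactSupport (by fun_prop) ?_
    refine hgc.mono' ?_
    refine (Function.support_subset_iff'.2 fun t ht => ?_)
    simp [image_eq_zero_of_notMem_tsupport ht]
  rw [fourierG, ← Complex.reCLM_apply, ← ContinuousLinearMap.integral_comp_comm _ hi]
  congr 1
  ext t
  rw [Complex.reCLM_apply, show Complex.I * (k : ℂ) * (t : ℂ) = ((k * t : ℝ) : ℂ) * Complex.I by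
    push_cast; ring, ← Complex.ofReal_pow, Complex.re_ofReal_mul, Complex.exp_ofReal_mul_I_re]

theorem fourierG_continuous (g : ℝ → ℝ) (hg : Continuous g) (hgc : HasCompactSupport g) :
    Continuous (fourierG g) := by
  have hi : Integrable fun t : ℝ => g t ^ 2 := by
    refine Continuous.integrable_of_hasCompactSupport (by fun_prop) (hgc.comp_left (g := (· ^ 2)) (by simp))
  refine continuous_of_dominated (bound := fun t => g t ^ 2) (fun k => ?_) (fun k => ?_) hi ?_
  · exact Continuous.aestronglyMeasurable (by fun_prop)
  · filter_upwards with t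
    rw [show Complex.I * (k : ℂ) * (t : ℂ) = ((k * t : ℝ) : ℂ) * Complex.I by
      push_cast; ring, norm_mul, Complex.norm_exp_ofReal_mul_I]
    simp
  · filter_upwards with t
    fun_prop

/-- Rapidities with prescribed difference `P` at which `cosh x cosh y / cosh²((x+y)/2) < A`. With
`S = x + y` the claim reads `cosh S + cosh P < A (cosh S + 1)`, which holds for large `S`. -/
theorem exists_rapidity (A P : ℝ) (hA : 1 < A) :
    ∃ x y : ℝ, x - y = P ∧ Real.cosh x * Real.cosh y < A * Real.cosh ((x + y) / 2) ^ 2 := by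
  obtain ⟨S, hS⟩ : ∃ S : ℝ, Real.cosh P < (A - 1) * Real.cosh S := by
    refine ⟨2 * Real.cosh P / (A - 1), ?_⟩
    have h1 : 0 < A - 1 := by linarith
    set S := 2 * Real.cosh P / (A - 1) with hS
    have h2 : S / 2 < Real.cosh S := by
      rw [Real.cosh_eq]
      have := Real.add_one_le_exp S
      have := Real.exp_pos (-S)
      linarith
    calc Real.cosh P = (A - 1) * (S / 2) := by rw [hS]; field_simp
      _ < _ := by gcongr
  refine ⟨(S + P) / 2, (S - P) / 2, by ring, ?_⟩
  have e1 : Real.cosh S = Real.cosh ((S + P) / 2) * Real.cosh ((S - P) / 2)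
      + Real.sinh ((S + P) / 2) * Real.sinh ((S - P) / 2) := by
    rw [← Real.cosh_add]; congr 1; ring
  have e2 : Real.cosh P = Real.cosh ((S + P) / 2) * Real.cosh ((S - P) / 2)
      - Real.sinh ((S + P) / 2) * Real.sinh ((S - P) / 2) := by
    rw [← Real.cosh_sub]; congr 1; ring
  have e3 : Real.cosh S = 2 * Real.cosh (S / 2) ^ 2 - 1 := by
    have := Real.cosh_two_mul (S / 2)
    have h2 := Real.cosh_sq (S / 2)
    rw [show 2 * (S / 2) = S by ring] at this
    linarith
  rw [show ((S + P) / 2 + (S - P) / 2) / 2 = S / 2 by ring]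
  nlinarith

/-- If `g` is supported where `cos (k t) > ρ`, then `Re G(k) > ρ G(0)`. -/
theorem exists_sampling (k ρ : ℝ) (hρ : ρ < 1) : ∃ g : SchwartzMap ℝ ℝ, HasCompactSupport g ∧
    ρ * (fourierG g 0).re < (fourierG g k).re := by
  have hopen : IsOpen {t : ℝ | ρ < Real.cos (k * t)} := isOpen_lt (by fun_prop) (by fun_prop)
  obtain ⟨ε, hε, hball⟩ := Metric.isOpen_iff.1 hopen 0 (by simpa using hρ)
  let ψ : ContDiffBump (0 : ℝ) := ⟨ε / 2, ε, by positivity, by linarith⟩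
  have hψc : Continuous ψ := ψ.continuous
  refine ⟨ψ.hasCompactSupport.toSchwartzMap ψ.contDiff, ψ.hasCompactSupport, ?_⟩
  change ρ * (fourierG ψ 0).re < (fourierG ψ k).re
  rw [fourierG_re _ hψc ψ.hasCompactSupport, fourierG_re _ hψc ψ.hasCompactSupport]
  have hsq : HasCompactSupport fun t => ψ t ^ 2 :=
    ψ.hasCompactSupport.comp_left (g := (· ^ 2)) (by simp)
  rw [← integral_const_mul, ← sub_pos, ← integral_sub]
  · have e : (fun t => ψ t ^ 2 * Real.cos (k * t) - ρ * (ψ t ^ 2 * Real.cos (0 * t)))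
        = fun t => ψ t ^ 2 * (Real.cos (k * t) - ρ) := by
      ext t; simp; ring
    rw [e]
    refine Continuous.integral_pos_of_hasCompactSupport_nonneg_nonzero (x := 0) (by fun_prop)
      hsq.mul_right ?_ ?_
    · intro t
      by_cases ht : |t| < ε
      · have : ρ < Real.cos (k * t) := hball (by simpa using ht)
        exact mul_nonneg (sq_nonneg _) (by linarith)
      · have : ψ t = 0 := ψ.zero_of_le_dist (by simpa using ht)
        simp [this]
    · have : ψ 0 = 1 := ψ.one_of_mem_closedBall (by simp; exact ψ.rIn_pos.le)
      simp [this]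
      linarith
  · exact Continuous.integrable_of_hasCompactSupport (by fun_prop) hsq.mul_right
  · exact Continuous.integrable_of_hasCompactSupport (by fun_prop)
      ((hsq.mul_right (f' := fun t => Real.cos (0 * t))).mul_left (f := fun _ => ρ))

/-- For real `φ`, the real part of `Q(φ)` as an integral over the plane with a real kernel. -/
theorem Qform_re (μ : ℝ) (FP : ℝ → ℝ) (hF : Continuous FP) (g : ℝ → ℝ) (hg : Continuous g)
    (hgc : HasCompactSupport g) (φ : ℝ → ℝ) (hφ : Continuous φ) (hφc : HasCompactSupport φ) :
    (Qform μ FP g (fun t => (φ t : ℂ))).re = μ ^ 2 / (2 * Real.pi) *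
      ∫ p : ℝ × ℝ, Real.cosh ((p.1 + p.2) / 2) ^ 2 * FP (p.1 - p.2) *
        (fourierG g (μ * Real.cosh p.1 - μ * Real.cosh p.2)).re * φ p.1 * φ p.2 := by
  have hG := fourierG_continuous g hg hgc
  set f : ℝ → ℝ → ℂ := fun θ η => (((Real.cosh ((θ + η) / 2)) ^ 2 * FP (θ - η) : ℝ) : ℂ) *
        fourierG g (μ * Real.cosh θ - μ * Real.cosh η) *
        (starRingEnd ℂ) ((φ θ : ℂ)) * (φ η : ℂ) with hf
  have hi : Integrable (Function.uncurry f) (volume.prod volume) := by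
    refine Continuous.integrable_of_hasCompactSupport ?_ ?_
    · simp only [hf, Function.uncurry_def, Complex.conj_ofReal]
      fun_prop
    · refine HasCompactSupport.intro (hφc.isCompact.prod hφc.isCompact) ?_
      rintro ⟨u, v⟩ huv
      by_contra hne
      have h1 : φ u ≠ 0 := fun h0 => hne (by simp [hf, h0])
      have h2 : φ v ≠ 0 := fun h0 => hne (by simp [hf, h0])
      exact huv ⟨subset_tsupport _ h1, subset_tsupport _ h2⟩
  rw [Qform, Complex.re_ofReal_mul, integral_integral (f := f) hi, ← Complex.reCLM_apply,
    ← ContinuousLinearMap.integral_comp_comm (φ := fun z : ℝ × ℝ => f z.1 z.2) _ hi]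
  congr 2
  ext p
  simp only [hf, Complex.reCLM_apply, Complex.conj_ofReal, Complex.re_mul_ofReal, Complex.re_ofReal_mul]

/-- Existence of one-particle states with negative energy density: if `|F_P(θ_P)| > 1`
for some `θ_P`, then some smooth compactly supported `φ` and real Schwartz `g` give
`Q(φ) < 0`. -/
theorem exists_negative_energy_density
    (μ : ℝ) (hμ : 0 < μ)
    (FP : ℝ → ℝ) (hFcont : Continuous FP) (hFeven : ∀ θ : ℝ, FP (-θ) = FP θ)
    (hFone : FP 0 = 1)
    (θP : ℝ) (hθP : 1 < |FP θP|) :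
    ∃ (φ : ℝ → ℂ) (g : SchwartzMap ℝ ℝ),
      ContDiff ℝ (⊤ : ℕ∞) φ ∧ HasCompactSupport φ ∧ (Qform μ FP (⇑g) φ).re < 0 := by
  obtain ⟨x, y, hxy, hlt⟩ := exists_rapidity _ θP hθP
  have hcx := Real.cosh_pos x
  have hcy := Real.cosh_pos y
  set D := |FP θP| * Real.cosh ((x + y) / 2) ^ 2 with hD
  have hDpos : 0 < D := (mul_pos hcx hcy).trans hlt
  obtain ⟨g, hgc, hg⟩ := exists_sampling (μ * Real.cosh x - μ * Real.cosh y)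
    (Real.cosh x * Real.cosh y / D) ((div_lt_one hDpos).2 hlt)
  have hgcont : Continuous g := g.continuous
  have hGc := fourierG_continuous g hgcont hgc
  have hsymm : (fourierG g (μ * Real.cosh y - μ * Real.cosh x)).re
      = (fourierG g (μ * Real.cosh x - μ * Real.cosh y)).re := by
    rw [fourierG_re _ hgcont hgc, fourierG_re _ hgcont hgc]
    congr 1; ext t
    rw [← Real.cos_neg]; congr 2; ring
  obtain ⟨φ, hφ, hφc, hneg⟩ := kernel_neg (fun p : ℝ × ℝ => Real.cosh ((p.1 + p.2) / 2) ^ 2 *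
    FP (p.1 - p.2) * (fourierG g (μ * Real.cosh p.1 - μ * Real.cosh p.2)).re) (by fun_prop) x y
    (Real.cosh y) (-SignType.sign (FP θP) * Real.cosh x) (by
      have hs : (SignType.sign (FP θP) : ℝ) * FP θP = |FP θP| := sign_mul_self _
      have hs2 : (SignType.sign (FP θP) : ℝ) * SignType.sign (FP θP) = 1 := by
        have : FP θP ≠ 0 := by intro h; simp [h] at hθP; linarith
        rcases this.lt_or_gt with h | h <;> simp [h]
      have hyx : FP (y - x) = FP θP := by rw [← hFeven, neg_sub, hxy]
      simp only [hxy, hyx, hsymm, sub_self, hFone, add_self_div_two, add_comm y x]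
      rw [div_mul_eq_mul_div, div_lt_iff₀ hDpos] at hg
      set G0 := (fourierG g 0).re
      set Gk := (fourierG g (μ * Real.cosh x - μ * Real.cosh y)).re
      set s : ℝ := (SignType.sign (FP θP) : ℝ)
      set C := Real.cosh ((x + y) / 2)
      -- `hg` now reads `cosh x * cosh y * G0 < Gk * D`; the form equals
      -- `2 cosh x cosh y (cosh x cosh y G0 - D Gk)` since `s * s = 1` and `s * FP θP = |FP θP|`.
      have key := mul_lt_mul_of_pos_left hg (mul_pos hcx hcy)
      rw [hD, ← hs] at key
      linear_combination 2 * key + Real.cosh x ^ 2 * Real.cosh y ^ 2 * G0 * hs2)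
  refine ⟨fun t => (φ t : ℂ), g, ?_, ?_, ?_⟩
  · exact Complex.ofRealCLM.contDiff.comp hφ
  · exact hφc.comp_left (g := ((↑) : ℝ → ℂ)) (by simp)
  · rw [Qform_re μ FP hFcont g hgcont hgc φ hφ.continuous hφc]
    exact mul_neg_of_pos_of_neg (by positivity) hneg
end

section
/- (Positivity of the free one-particle energy density.) Let μ > 0 and take F_P ≡ 1 (the free Bose field with canonical stress-energy tensor). Then for every real-valued Schwartz function g on ℝ and every smooth compactly supported φ : ℝ → ℂ, one has Q(φ) ≥ 0; that is, (μ²/(2π)) ∫_ℝ ∫_ℝ cosh²((θ+η)/2) · G(ω(θ)−ω(η)) · conj(φ(θ)) · φ(η) dθ dη ≥ 0. -/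
/-!
The addition formula `2 cosh²((θ+η)/2) = 1 + cosh θ cosh η + sinh θ sinh η` writes the kernel as a
sum of three terms `c(θ) c(η) G(ω(θ) - ω(η))` with `c` real. Inserting the definition of `G` and
exchanging the integrals by Fubini, each term contributes
`∫ g(t)² |∫ c(η) φ(η) e^{-iω(η)t} dη|² dt ≥ 0`.
The Fubini argument for one such term, with `f = c φ`, is `rankOne_integrable` and `rankOne_nonneg`.
-/

open MeasureTheory

/-- The integrand in `(θ, η, t)` obtained by unfolding `fourierG` in
`G(w θ - w η) conj (f θ) (f η)`. -/
noncomputable def tripleKernel (w : ℝ → ℝ) (g : ℝ → ℝ) (f : ℝ → ℂ) (z : ℝ × ℝ) (t : ℝ) : ℂ :=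
  (g t : ℂ) ^ 2 * Complex.exp (Complex.I * ((w z.1 - w z.2 : ℝ) : ℂ) * (t : ℂ)) *
    ((starRingEnd ℂ) (f z.1) * f z.2)

lemma integral_tripleKernel (w : ℝ → ℝ) (g : ℝ → ℝ) (f : ℝ → ℂ) (z : ℝ × ℝ) :
    ∫ t, tripleKernel w g f z t =
      fourierG g (w z.1 - w z.2) * ((starRingEnd ℂ) (f z.1) * f z.2) := by
  simp only [tripleKernel, fourierG]
  rw [integral_mul_const]

lemma tripleKernel_integrable (w : ℝ → ℝ) (hw : Continuous w) (g : SchwartzMap ℝ ℝ)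
    (f : ℝ → ℂ) (hf : Integrable f) :
    Integrable (Function.uncurry (tripleKernel w g f))
      ((volume.prod volume : Measure (ℝ × ℝ)).prod volume) := by
  have hg2 : Integrable (fun t => (g t : ℂ) ^ 2) := by
    have h := (g.memLp 2 (μ := volume)).integrable_sq
    exact_mod_cast h.ofReal (𝕜 := ℂ)
  have hconj : Integrable (fun x => (starRingEnd ℂ) (f x)) :=
    (LinearIsometryEquiv.integrable_comp_iff Complex.conjLIE).2 hf
  have h1 := (hconj.mul_prod hf).mul_prod hg2
  have h2 : Integrable (fun p : (ℝ × ℝ) × ℝ =>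
      Complex.exp (Complex.I * ((w p.1.1 - w p.1.2 : ℝ) : ℂ) * (p.2 : ℂ)) *
        ((starRingEnd ℂ) (f p.1.1) * f p.1.2 * (g p.2 : ℂ) ^ 2))
      ((volume.prod volume : Measure (ℝ × ℝ)).prod volume) := by
    refine h1.bdd_mul (c := 1) ?_ ?_
    · exact Continuous.aestronglyMeasurable (by fun_prop)
    · refine Filter.Eventually.of_forall fun p => le_of_eq ?_
      rw [mul_assoc, mul_comm, ← Complex.ofReal_mul, Complex.norm_exp_ofReal_mul_I]
  refine h2.congr (Filter.Eventually.of_forall fun p => ?_)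
  simp only [Function.uncurry, tripleKernel]
  ring

lemma rankOne_integrable (w : ℝ → ℝ) (hw : Continuous w) (g : SchwartzMap ℝ ℝ)
    (f : ℝ → ℂ) (hf : Integrable f) :
    Integrable (fun z : ℝ × ℝ =>
      fourierG g (w z.1 - w z.2) * ((starRingEnd ℂ) (f z.1) * f z.2))
      (volume.prod volume) := by
  have h := (tripleKernel_integrable w hw g f hf).integral_prod_left
  simpa only [Function.uncurry, integral_tripleKernel] using h

lemma rankOne_nonneg (w : ℝ → ℝ) (hw : Continuous w) (g : SchwartzMap ℝ ℝ)
    (f : ℝ → ℂ) (hf : Integrable f) :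
    0 ≤ (∫ z : ℝ × ℝ, fourierG g (w z.1 - w z.2) * ((starRingEnd ℂ) (f z.1) * f z.2)
      ∂(volume.prod volume)).re := by
  simp only [← integral_tripleKernel]
  rw [integral_integral_swap (tripleKernel_integrable w hw g f hf)]
  have key : ∀ t : ℝ, ∫ z : ℝ × ℝ, tripleKernel w g f z t ∂(volume.prod volume) =
      (((g t) ^ 2 * Complex.normSq
        (∫ y, f y * Complex.exp (-(Complex.I * (w y : ℂ) * (t : ℂ)))) : ℝ) : ℂ) := by
    intro t
    have e : ∀ z : ℝ × ℝ, tripleKernel w g f z t = (g t : ℂ) ^ 2 *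
        ((starRingEnd ℂ) (f z.1 * Complex.exp (-(Complex.I * (w z.1 : ℂ) * (t : ℂ)))) *
          (f z.2 * Complex.exp (-(Complex.I * (w z.2 : ℂ) * (t : ℂ))))) := by
      intro z
      have : Complex.exp (Complex.I * ((w z.1 - w z.2 : ℝ) : ℂ) * (t : ℂ)) =
          Complex.exp (Complex.I * (w z.1 : ℂ) * (t : ℂ)) *
            Complex.exp (-(Complex.I * (w z.2 : ℂ) * (t : ℂ))) := by
        rw [← Complex.exp_add]
        congr 1
        push_cast
        ring
      simp only [tripleKernel, this, map_mul, ← Complex.exp_conj, map_neg, Complex.conj_I,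
        Complex.conj_ofReal, neg_mul, neg_neg]
      ring
    simp only [e]
    rw [integral_const_mul, integral_prod_mul
      (fun y => (starRingEnd ℂ) (f y * Complex.exp (-(Complex.I * (w y : ℂ) * (t : ℂ)))))
      (fun y => f y * Complex.exp (-(Complex.I * (w y : ℂ) * (t : ℂ)))), integral_conj]
    push_cast
    rw [Complex.normSq_eq_conj_mul_self]
  simp only [key]
  rw [integral_complex_ofReal, Complex.ofReal_re]
  exact integral_nonneg fun t => mul_nonneg (sq_nonneg _) (Complex.normSq_nonneg _)

/-- Positivity of the free one-particle energy density (`F_P ≡ 1`): for every real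
Schwartz `g` and every smooth compactly supported `φ`, `Q(φ) ≥ 0`. -/
theorem free_energy_density_nonneg
    (μ : ℝ) (hμ : 0 < μ)
    (g : SchwartzMap ℝ ℝ)
    (φ : ℝ → ℂ) (hφsmooth : ContDiff ℝ (⊤ : ℕ∞) φ) (hφsupp : HasCompactSupport φ) :
    0 ≤ (Qform μ (fun _ : ℝ => 1) (⇑g) φ).re := by
  have hφ : Continuous φ := hφsmooth.continuous
  have hw : Continuous fun x : ℝ => μ * Real.cosh x := by fun_prop
  have hi : ∀ c : ℝ → ℝ, Continuous c → Integrable (fun x => (c x : ℂ) * φ x) := fun c hc =>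
    Continuous.integrable_of_hasCompactSupport (by fun_prop) hφsupp.mul_left
  have hf1 := hi (fun _ => 1) (by fun_prop)
  have hf2 := hi Real.cosh (by fun_prop)
  have hf3 := hi Real.sinh (by fun_prop)
  have i1 := rankOne_integrable _ hw g _ hf1
  have i2 := rankOne_integrable _ hw g _ hf2
  have i3 := rankOne_integrable _ hw g _ hf3
  have p1 := rankOne_nonneg _ hw g _ hf1
  have p2 := rankOne_nonneg _ hw g _ hf2
  have p3 := rankOne_nonneg _ hw g _ hf3
  have hcosh : ∀ x y : ℝ, Real.cosh ((x + y) / 2) ^ 2 =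
      (1 + Real.cosh x * Real.cosh y + Real.sinh x * Real.sinh y) / 2 := by
    intro x y
    have h1 := Real.cosh_two_mul ((x + y) / 2)
    have h2 := Real.cosh_sq ((x + y) / 2)
    rw [mul_div_cancel₀ _ (two_ne_zero), Real.cosh_add] at h1
    linarith
  have split : ∀ z : ℝ × ℝ,
      (((Real.cosh ((z.1 + z.2) / 2)) ^ 2 * 1 : ℝ) : ℂ) *
        fourierG g (μ * Real.cosh z.1 - μ * Real.cosh z.2) *
        (starRingEnd ℂ) (φ z.1) * φ z.2 = ((1 / 2 : ℝ) : ℂ) *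
      (fourierG g (μ * Real.cosh z.1 - μ * Real.cosh z.2) *
          ((starRingEnd ℂ) (((1 : ℝ) : ℂ) * φ z.1) * (((1 : ℝ) : ℂ) * φ z.2)) +
        fourierG g (μ * Real.cosh z.1 - μ * Real.cosh z.2) *
          ((starRingEnd ℂ) ((Real.cosh z.1 : ℂ) * φ z.1) * ((Real.cosh z.2 : ℂ) * φ z.2)) +
        fourierG g (μ * Real.cosh z.1 - μ * Real.cosh z.2) *
          ((starRingEnd ℂ) ((Real.sinh z.1 : ℂ) * φ z.1) * ((Real.sinh z.2 : ℂ) * φ z.2))) := by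
    intro z
    rw [hcosh]
    simp only [map_mul, Complex.conj_ofReal]
    push_cast
    ring
  have hint := ((i1.add i2).add i3).const_mul ((1 / 2 : ℝ) : ℂ)
  have htot : ∫ θ : ℝ, ∫ η : ℝ, (((Real.cosh ((θ + η) / 2)) ^ 2 * 1 : ℝ) : ℂ) *
        fourierG g (μ * Real.cosh θ - μ * Real.cosh η) * (starRingEnd ℂ) (φ θ) * φ η =
      ∫ z : ℝ × ℝ, (((Real.cosh ((z.1 + z.2) / 2)) ^ 2 * 1 : ℝ) : ℂ) *
        fourierG g (μ * Real.cosh z.1 - μ * Real.cosh z.2) *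
        (starRingEnd ℂ) (φ z.1) * φ z.2 ∂(volume.prod volume) :=
    (integral_prod _ (hint.congr (Filter.Eventually.of_forall fun z => (split z).symm))).symm
  rw [Qform, htot, Complex.re_ofReal_mul]
  refine mul_nonneg (by positivity) ?_
  simp only [split]
  rw [integral_const_mul, integral_add (by exact i1.add i2) i3, integral_add i1 i2,
    Complex.re_ofReal_mul, Complex.add_re, Complex.add_re]
  linarith
end

section
/- (QEI for the Ising model with P ≡ 1.) Let μ > 0 and let F_P(θ) = cosh(θ/2) (the one-particle energy density kernel of the massive Ising model, whose minimal solution satisfies F_min(θ+iπ) = cosh(θ/2)). Then for every real-valued Schwartz function g on ℝ there exists a constant c_g > 0 such that for all smooth compactly supported φ : ℝ → ℂ one has Q(φ) ≥ −c_g·‖φ‖². -/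
/-!
The product formula for `cosh` turns the kernel `cosh²((θ+η)/2) cosh((θ-η)/2)` into
`(cosh θ + cosh η)/2 · (cosh(θ/2) cosh(η/2) + sinh(θ/2) sinh(η/2))` (`cosh_identity`). So `Q(φ)` is
a sum of two forms with kernel proportional to `(ω(θ) + ω(η)) G(ω(θ) - ω(η))`, evaluated at
`ψ = cosh(·/2) φ` and `ψ = sinh(·/2) φ`.

With `ĝ` the Fourier transform of `g`, Plancherel and the symmetry `ĝ(-s) = conj ĝ(s)` give
`(a + b) G(2π(a - b)) = 2 ∫ s ĝ(s - a) conj ĝ(s - b) ds` (`key_identity`). By Fubini each of the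
two forms is then a positive multiple of `∫ s |A(s)|² ds`, where
`A(s) = ∫ conj ĝ(s - ω(η)/2π) ψ(η) dη` (`Qform_eq`).

Frequencies `s ≥ 0` contribute non-negatively. For `s < 0` the argument of `ĝ` has
absolute value `|s| + ω/2π`, so the Schwartz decay of `ĝ` and Cauchy–Schwarz bound
`|s| |A(s)|²` by a constant times `‖φ‖² / (1 + s²)` (`amp_bound`), which is integrable in `s`.
-/

open MeasureTheory

open SchwartzMap FourierTransform ComplexConjugate

/-! ### The Fourier identity -/

/-- The complexification of the real Schwartz function `g`. -/
noncomputable def gC (g : SchwartzMap ℝ ℝ) : SchwartzMap ℝ ℂ :=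
  SchwartzMap.postcompCLM Complex.ofRealCLM g

/-- The Fourier transform of `g`, in Mathlib's normalisation `∫ g(t) e^{-2πits} dt`. -/
noncomputable def ghat (g : SchwartzMap ℝ ℝ) : SchwartzMap ℝ ℂ := 𝓕 (gC g)

/-- Reality of `g` in Fourier space. -/
lemma ghat_neg (g : SchwartzMap ℝ ℝ) (x : ℝ) : ghat g (-x) = conj (ghat g x) := by
  unfold ghat
  rw [SchwartzMap.fourier_coe, Real.fourier_real_eq_integral_exp_smul,
    Real.fourier_real_eq_integral_exp_smul, ← integral_conj]
  congr 1; ext t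
  simp only [smul_eq_mul, map_mul, ← Complex.exp_conj, Complex.conj_ofReal, Complex.conj_I]
  congr 1
  · push_cast; ring_nf
  · simp [gC]

/-- Translation by `a` in Fourier space is multiplication by a phase. -/
lemma fourierInv_translate (g : SchwartzMap ℝ ℝ) (a t : ℝ) :
    (𝓕⁻ (SchwartzMap.compSubConstCLM ℂ a (ghat g))) t
      = Complex.exp (2 * Real.pi * Complex.I * a * t) * g t := by
  have h0 : (𝓕⁻ (ghat g)) t = (g t : ℂ) := by
    unfold ghat
    rw [FourierTransform.fourierInv_fourier_eq]; simp [gC]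
  rw [← h0, SchwartzMap.fourierInv_coe, SchwartzMap.fourierInv_coe,
    Real.fourierInv_eq', Real.fourierInv_eq', ← integral_const_mul,
    ← integral_add_right_eq_self _ a]
  congr 1; ext s
  simp only [SchwartzMap.compSubConstCLM_apply, smul_eq_mul, ← mul_assoc, ← Complex.exp_add,
    add_sub_cancel_right]
  congr 2
  simp
  ring

/-- Plancherel applied to two modulations of `g`; this produces `G`, the transform of `g²`. -/
lemma plancherel_translate (g : SchwartzMap ℝ ℝ) (a b : ℝ) :
    ∫ s : ℝ, ghat g (s - a) * conj (ghat g (s - b))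
      = fourierG g (2 * Real.pi * (a - b)) := by
  have h := SchwartzMap.integral_inner_fourier_fourier
    (𝓕⁻ (SchwartzMap.compSubConstCLM ℂ b (ghat g)))
    (𝓕⁻ (SchwartzMap.compSubConstCLM ℂ a (ghat g)))
  simp only [FourierTransform.fourier_fourierInv_eq, fourierInv_translate] at h
  simp only [SchwartzMap.compSubConstCLM_apply, RCLike.inner_apply] at h
  rw [h, fourierG]
  congr 1; ext t
  simp only [map_mul, ← Complex.exp_conj, Complex.conj_ofReal, Complex.conj_I, map_ofNat]
  rw [show Complex.exp (2 * Real.pi * Complex.I * a * t) * (g t : ℂ) *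
    (Complex.exp (2 * Real.pi * -Complex.I * b * t) * (g t : ℂ)) = (g t : ℂ) ^ 2 *
    (Complex.exp (2 * Real.pi * Complex.I * a * t) * Complex.exp (2 * Real.pi * -Complex.I * b * t))
    by ring, ← Complex.exp_add]
  congr 2
  push_cast; ring

lemma integrable_ghat_prod (g : SchwartzMap ℝ ℝ) (a b : ℝ) :
    Integrable (fun s : ℝ => ghat g (s - a) * conj (ghat g (s - b))) := by
  obtain ⟨C, hC⟩ := (ghat g).decay 0 0
  have hC := hC.2
  simp only [pow_zero, norm_iteratedFDeriv_zero, one_mul] at hC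
  refine ((ghat g).integrable.comp_sub_right a).mul_bdd (c := C) ?_ ?_
  · have := (ghat g).continuous
    exact Continuous.aestronglyMeasurable (by fun_prop)
  · exact Filter.Eventually.of_forall fun s => by simpa using hC _

/-- The bound that makes every later integrand absolutely integrable: the factor `s` is absorbed
by one copy of `ghat g`, at the price of growth in the shift. -/
lemma norm_mul_ghat_le (g : SchwartzMap ℝ ℝ) : ∃ C : ℝ, 0 ≤ C ∧ ∀ s a : ℝ,
    ‖(s : ℂ) * ghat g (s - a)‖ ≤ C * (1 + |a|) := by
  obtain ⟨C, hC⟩ := (ghat g).decay 0 0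
  obtain ⟨D, hD⟩ := (ghat g).decay 1 0
  have hC0 := hC.1
  have hD0 := hD.1
  have hC := hC.2
  have hD := hD.2
  simp only [pow_zero, norm_iteratedFDeriv_zero, one_mul, pow_one] at hC hD
  refine ⟨C + D, by positivity, fun s a => ?_⟩
  have h1 := hC (s - a)
  have h2 := hD (s - a)
  have h3 : |s| ≤ |s - a| + |a| := by
    simpa using abs_add_le (s - a) a
  rw [norm_mul, Complex.norm_real]
  rw [Real.norm_eq_abs] at *
  calc |s| * ‖ghat g (s - a)‖ ≤ (|s - a| + |a|) * ‖ghat g (s - a)‖ := by gcongr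
    _ = |s - a| * ‖ghat g (s - a)‖ + |a| * ‖ghat g (s - a)‖ := by ring
    _ ≤ D + |a| * C := by gcongr
    _ ≤ (C + D) * (1 + |a|) := by nlinarith [abs_nonneg a]

lemma integrable_mul_ghat_prod (g : SchwartzMap ℝ ℝ) (a b : ℝ) :
    Integrable (fun s : ℝ => (s : ℂ) * (ghat g (s - a) * conj (ghat g (s - b)))) := by
  obtain ⟨C, -, hC⟩ := norm_mul_ghat_le g
  have := (ghat g).continuous
  have h := ((ghat g).integrable (μ := volume)).comp_sub_right b
  refine (h.norm.const_mul (C * (1 + |a|))).mono' ?_ ?_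
  · exact Continuous.aestronglyMeasurable (by fun_prop)
  · refine Filter.Eventually.of_forall fun s => ?_
    rw [← mul_assoc, norm_mul, RCLike.norm_conj]
    gcongr
    exact hC s a

/-- The identity behind the quantum energy inequality: it writes `(a + b) G(2π(a - b))` as a
superposition, weighted by the signed frequency `s`, of kernels of positive type. The reflection
`s ↦ a + b - s` preserves `ghat g (s - a) * conj (ghat g (s - b))`, so the weight `s` may be
replaced by its average `(a + b) / 2`. -/
lemma key_identity (g : SchwartzMap ℝ ℝ) (a b : ℝ) :
    2 * ∫ s : ℝ, (s : ℂ) * (ghat g (s - a) * conj (ghat g (s - b)))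
      = ((a + b : ℝ) : ℂ) * fourierG g (2 * Real.pi * (a - b)) := by
  have h : ∫ s : ℝ, (s : ℂ) * (ghat g (s - a) * conj (ghat g (s - b)))
      = ∫ s : ℝ, (((a + b : ℝ) : ℂ) * (ghat g (s - a) * conj (ghat g (s - b)))
          - (s : ℂ) * (ghat g (s - a) * conj (ghat g (s - b)))) := by
    -- The reflection `s ↦ a + b - s` is applied to the left-hand side only.
    rw [← integral_sub_left_eq_self _ volume (a + b)]
    congr 1; ext s
    rw [show a + b - s - a = -(s - b) by ring, show a + b - s - b = -(s - a) by ring,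
      ghat_neg, ghat_neg, Complex.conj_conj]
    push_cast; ring
  rw [integral_sub ((integrable_ghat_prod g a b).const_mul _) (integrable_mul_ghat_prod g a b),
    integral_const_mul, plancherel_translate] at h
  linear_combination h

lemma cosh_ge (x : ℝ) : (1 + x ^ 2) / 2 ≤ Real.cosh x := by
  have h1 : Real.cosh x = 1 + 2 * Real.sinh (x / 2) ^ 2 := by
    have := Real.cosh_two_mul (x / 2)
    rw [mul_div_cancel₀ x two_ne_zero] at this
    rw [this, Real.cosh_sq]; ring
  have h2 : (x / 2) ^ 2 ≤ Real.sinh (x / 2) ^ 2 := by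
    rw [sq_le_sq, Real.abs_sinh]
    exact Real.self_le_sinh_iff.2 (abs_nonneg _)
  nlinarith

lemma cauchy_schwarz {w u : ℝ → ℝ} (hw : MemLp w 2) (hu : MemLp u 2)
    (hw0 : ∀ x, 0 ≤ w x) (hu0 : ∀ x, 0 ≤ u x) :
    (∫ x, w x * u x) ^ 2 ≤ (∫ x, w x ^ 2) * ∫ x, u x ^ 2 := by
  have h := integral_mul_le_Lp_mul_Lq_of_nonneg (μ := volume) (p := 2) (q := 2)
    (by exact Real.HolderConjugate.two_two) (.of_forall hw0) (.of_forall hu0)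
    (by simpa using hw) (by simpa using hu)
  simp only [Real.rpow_two, ← Real.sqrt_eq_rpow] at h
  have h0 : 0 ≤ ∫ x, w x * u x := integral_nonneg fun x => mul_nonneg (hw0 x) (hu0 x)
  calc (∫ x, w x * u x) ^ 2 ≤ (√(∫ x, w x ^ 2) * √(∫ x, u x ^ 2)) ^ 2 := by gcongr
    _ = _ := by
      rw [mul_pow, Real.sq_sqrt (integral_nonneg fun x => by positivity),
        Real.sq_sqrt (integral_nonneg fun x => by positivity)]

/-! ### Diagonalisation of the form -/

/-- The amplitude of `ψ` at frequency `s`, for the dispersion function `a`. -/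
noncomputable def amp (g : SchwartzMap ℝ ℝ) (a : ℝ → ℝ) (ψ : ℝ → ℂ) (s : ℝ) : ℂ :=
  ∫ η : ℝ, conj (ghat g (s - a η)) * ψ η

/-- Absolute integrability in `(θ, η, s)`, which justifies all exchanges of integrals. -/
lemma integrable_triple (g : SchwartzMap ℝ ℝ) {a : ℝ → ℝ} (ha : Continuous a) {ψ : ℝ → ℂ}
    (hψ : Continuous ψ) (hs : HasCompactSupport ψ) :
    Integrable (fun q : (ℝ × ℝ) × ℝ => (q.2 : ℂ) * ((ghat g (q.2 - a q.1.1) * conj (ψ q.1.1)) *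
      (conj (ghat g (q.2 - a q.1.2)) * ψ q.1.2)))
      ((volume.prod volume).prod volume) := by
  obtain ⟨C, hC0, hC⟩ := norm_mul_ghat_le g
  have hF := (ghat g).continuous
  have hu : Integrable (fun x => (C * (1 + |a x|)) * ‖ψ x‖) :=
    Continuous.integrable_of_hasCompactSupport (by fun_prop) hs.norm.mul_left
  have hv : Integrable (fun x => ‖ψ x‖) :=
    Continuous.integrable_of_hasCompactSupport (by fun_prop) hs.norm
  have hB : Integrable (fun q : (ℝ × ℝ) × ℝ => ((C * (1 + |a q.1.1|)) * ‖ψ q.1.1‖ * ‖ψ q.1.2‖) *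
      ‖ghat g (q.2 - a q.1.2)‖) ((volume.prod volume).prod volume) := by
    rw [integrable_prod_iff (Continuous.aestronglyMeasurable (by fun_prop))]
    constructor
    · refine Filter.Eventually.of_forall fun p => ?_
      exact (((ghat g).integrable (μ := volume)).comp_sub_right (a p.2)).norm.const_mul
        ((C * (1 + |a p.1|)) * ‖ψ p.1‖ * ‖ψ p.2‖)
    · have h : ∀ p : ℝ × ℝ, ∫ s : ℝ, ‖((C * (1 + |a p.1|)) * ‖ψ p.1‖ * ‖ψ p.2‖) *
          ‖ghat g (s - a p.2)‖‖ = ((C * (1 + |a p.1|)) * ‖ψ p.1‖ * ‖ψ p.2‖) *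
            ∫ s : ℝ, ‖ghat g s‖ := by
        intro p
        rw [← integral_sub_right_eq_self (fun s => ‖ghat g s‖) (a p.2), ← integral_const_mul]
        congr 1; ext s
        rw [Real.norm_of_nonneg (by positivity)]
      simp only [h]
      exact (hu.mul_prod hv).mul_const _
  refine hB.mono' (Continuous.aestronglyMeasurable (by fun_prop)) ?_
  refine Filter.Eventually.of_forall fun q => ?_
  have h := hC q.2 (a q.1.1)
  calc _ = ‖(q.2 : ℂ) * ghat g (q.2 - a q.1.1)‖ * (‖ψ q.1.1‖ * ‖ψ q.1.2‖ *
      ‖ghat g (q.2 - a q.1.2)‖) := by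
        simp only [norm_mul, RCLike.norm_conj]; ring
    _ ≤ (C * (1 + |a q.1.1|)) * (‖ψ q.1.1‖ * ‖ψ q.1.2‖ * ‖ghat g (q.2 - a q.1.2)‖) := by gcongr
    _ = _ := by ring

lemma inner_triple (g : SchwartzMap ℝ ℝ) (a : ℝ → ℝ) (ψ : ℝ → ℂ) (p : ℝ × ℝ) :
    ∫ s : ℝ, (s : ℂ) * ((ghat g (s - a p.1) * conj (ψ p.1)) *
      (conj (ghat g (s - a p.2)) * ψ p.2))
      = (1 / 2 : ℂ) * (((a p.1 + a p.2 : ℝ) : ℂ) * fourierG g (2 * Real.pi * (a p.1 - a p.2)) *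
        (conj (ψ p.1) * ψ p.2)) := by
  rw [← key_identity, mul_assoc, ← integral_mul_const, ← mul_assoc, one_div,
    inv_mul_cancel₀ two_ne_zero, one_mul]
  congr 1; ext s; ring

lemma outer_triple (g : SchwartzMap ℝ ℝ) (a : ℝ → ℝ) (ψ : ℝ → ℂ) (s : ℝ) :
    ∫ p : ℝ × ℝ, (s : ℂ) * ((ghat g (s - a p.1) * conj (ψ p.1)) *
      (conj (ghat g (s - a p.2)) * ψ p.2)) ∂(volume.prod volume)
      = ((s * ‖amp g a ψ s‖ ^ 2 : ℝ) : ℂ) := by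
  rw [integral_const_mul, integral_prod_mul (μ := volume) (ν := volume)
    (fun x => ghat g (s - a x) * conj (ψ x)) (fun x => conj (ghat g (s - a x)) * ψ x)]
  have h : ∫ x, ghat g (s - a x) * conj (ψ x) = conj (amp g a ψ s) := by
    rw [amp, ← integral_conj]; simp
  rw [h, ← amp, mul_comm (conj _), Complex.mul_conj, Complex.normSq_eq_norm_sq]
  push_cast; rfl

lemma integrable_double (g : SchwartzMap ℝ ℝ) {a : ℝ → ℝ} (ha : Continuous a) {ψ : ℝ → ℂ}
    (hψ : Continuous ψ) (hs : HasCompactSupport ψ) :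
    Integrable (fun p : ℝ × ℝ => ((a p.1 + a p.2 : ℝ) : ℂ) *
      fourierG g (2 * Real.pi * (a p.1 - a p.2)) * (conj (ψ p.1) * ψ p.2))
      (volume.prod volume) := by
  have h := ((integrable_triple g ha hψ hs).integral_prod_left).const_mul 2
  simp only [inner_triple] at h
  refine h.congr (.of_forall fun p => ?_)
  simp only []
  ring

lemma integrable_amp (g : SchwartzMap ℝ ℝ) {a : ℝ → ℝ} (ha : Continuous a) {ψ : ℝ → ℂ}
    (hψ : Continuous ψ) (hs : HasCompactSupport ψ) :
    Integrable (fun s : ℝ => s * ‖amp g a ψ s‖ ^ 2) := by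
  have h := (integrable_triple g ha hψ hs).integral_prod_right
  simp only [outer_triple] at h
  exact h.re

/-- The form with kernel `(a(θ) + a(η)) G(2π(a(θ) - a(η)))` is diagonal in the frequency `s`. -/
lemma integral_double (g : SchwartzMap ℝ ℝ) {a : ℝ → ℝ} (ha : Continuous a) {ψ : ℝ → ℂ}
    (hψ : Continuous ψ) (hs : HasCompactSupport ψ) :
    ∫ p : ℝ × ℝ, ((a p.1 + a p.2 : ℝ) : ℂ) *
      fourierG g (2 * Real.pi * (a p.1 - a p.2)) * (conj (ψ p.1) * ψ p.2)
      ∂(volume.prod volume) = ((2 * ∫ s : ℝ, s * ‖amp g a ψ s‖ ^ 2 : ℝ) : ℂ) := by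
  have h := integral_integral_swap (f := fun (p : ℝ × ℝ) (s : ℝ) => (s : ℂ) *
    ((ghat g (s - a p.1) * conj (ψ p.1)) * (conj (ghat g (s - a p.2)) * ψ p.2)))
    (integrable_triple g ha hψ hs)
  simp only [inner_triple, outer_triple] at h
  rw [integral_const_mul, integral_complex_ofReal] at h
  rw [Complex.ofReal_mul, ← h, Complex.ofReal_ofNat, ← mul_assoc, mul_one_div_cancel two_ne_zero,
    one_mul]

/-! ### The negative frequencies -/

/-- Lower bound for the integrand at frequency `s`. It is trivial for `s ≥ 0`. For `s < 0` the
argument `s - m cosh x` of `ghat g` has absolute value `|s| + m cosh x`, so the rapid decay of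
`ghat g` beats both the factor `c x` and the weight `s`, and Cauchy–Schwarz gives the `L²` norm
of `φ`. -/
lemma amp_bound (g : SchwartzMap ℝ ℝ) {m : ℝ} (hm : 0 < m) : ∃ K : ℝ, 0 ≤ K ∧
    ∀ c : ℝ → ℝ, (∀ x, |c x| ≤ Real.cosh x) → ∀ φ : ℝ → ℂ, Continuous φ → HasCompactSupport φ →
      ∀ s : ℝ, -(K * ∫ x, ‖φ x‖ ^ 2) * (1 + s ^ 2)⁻¹ ≤
        s * ‖amp g (fun x => m * Real.cosh x) (fun x => c x * φ x) s‖ ^ 2 := by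
  obtain ⟨C, hC0, hC⟩ : ∃ C : ℝ, 0 ≤ C ∧ ∀ x : ℝ, (1 + |x|) ^ 4 * ‖ghat g x‖ ≤ C := by
    have h := fun x => SchwartzMap.one_add_le_sup_seminorm_apply (𝕜 := ℝ) (m := (4, 0)) (k := 4)
      (n := 0) le_rfl le_rfl (ghat g) x
    simp only [norm_iteratedFDeriv_zero, Real.norm_eq_abs] at h
    exact ⟨_, le_trans (by positivity) (h 0), h⟩
  set w : ℝ → ℝ := fun x => (Real.cosh x)⁻¹ with hw
  have hwc : Continuous w := Real.continuous_cosh.inv₀ fun x => (Real.cosh_pos x).ne'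
  have hw0 : ∀ x, 0 ≤ w x := fun x => inv_nonneg.2 (Real.cosh_pos x).le
  have hw2 : Integrable fun x => w x ^ 2 := by
    refine (integrable_inv_one_add_sq.const_mul 2).mono'
      (Continuous.aestronglyMeasurable (by fun_prop)) (.of_forall fun x => ?_)
    have h1 : w x ≤ 1 := inv_le_one_of_one_le₀ (Real.one_le_cosh x)
    have h2 : w x ≤ 2 * (1 + x ^ 2)⁻¹ := by
      have := inv_anti₀ (by positivity) (cosh_ge x)
      rw [inv_div] at this
      exact this
    rw [Real.norm_of_nonneg (by positivity)]
    nlinarith [hw0 x]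
  have hwL : MemLp w 2 := (memLp_two_iff_integrable_sq hwc.aestronglyMeasurable).2 hw2
  set J := ∫ x, w x ^ 2
  have hJ : 0 ≤ J := integral_nonneg fun x => by positivity
  refine ⟨(C / m ^ 2) ^ 2 * J, by positivity, fun c hc φ hφ hφs s => ?_⟩
  have hN : 0 ≤ ∫ x, ‖φ x‖ ^ 2 := integral_nonneg fun x => by positivity
  rcases le_or_gt 0 s with h0 | h0
  · refine le_trans ?_ (by positivity : (0:ℝ) ≤ _)
    rw [neg_mul]
    exact neg_nonpos.2 (by positivity)
  set n := -s with hn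
  have hn0 : 0 < n := by simpa [hn] using h0
  have hcs := cauchy_schwarz hwL (u := fun x => ‖φ x‖)
    ((hφ.memLp_of_hasCompactSupport hφs).norm) hw0 (fun x => norm_nonneg _)
  have hwi : Integrable fun x => w x * ‖φ x‖ :=
    Continuous.integrable_of_hasCompactSupport (by fun_prop) hφs.norm.mul_left
  have hA : ‖amp g (fun x => m * Real.cosh x) (fun x => c x * φ x) s‖ ≤
      (C / m ^ 2 * ((1 + n) ^ 2)⁻¹) * ∫ x, w x * ‖φ x‖ := by
    rw [← integral_const_mul]
    refine norm_integral_le_of_norm_le (hwi.const_mul _) (.of_forall fun x => ?_)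
    have hch := Real.cosh_pos x
    have hx : |s - m * Real.cosh x| = n + m * Real.cosh x := by
      rw [abs_of_neg (by nlinarith [mul_pos hm hch])]; simp [hn]; ring
    have h1 := hC (s - m * Real.cosh x)
    rw [hx] at h1
    have h2 : (1 + n) ^ 2 * (m * Real.cosh x) ^ 2 * ‖ghat g (s - m * Real.cosh x)‖ ≤ C := by
      refine le_trans ?_ h1
      gcongr
      have : (1 + (n + m * Real.cosh x)) ^ 4 =
        (1 + (n + m * Real.cosh x)) ^ 2 * (1 + (n + m * Real.cosh x)) ^ 2 := by ring
      rw [this]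
      have hmc : 0 < m * Real.cosh x := by positivity
      gcongr <;> linarith
    have h3 : ‖ghat g (s - m * Real.cosh x)‖ ≤ C / ((1 + n) ^ 2 * (m * Real.cosh x) ^ 2) := by
      rw [le_div_iff₀ (by positivity)]; linarith
    rw [norm_mul, norm_mul, RCLike.norm_conj, Complex.norm_real, Real.norm_eq_abs]
    calc ‖ghat g (s - m * Real.cosh x)‖ * (|c x| * ‖φ x‖)
        ≤ C / ((1 + n) ^ 2 * (m * Real.cosh x) ^ 2) * (Real.cosh x * ‖φ x‖) := by
          gcongr; exact hc x
      _ = _ := by simp only [hw]; field_simp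
  have hA2 : ‖amp g (fun x => m * Real.cosh x) (fun x => c x * φ x) s‖ ^ 2 ≤
      (C / m ^ 2 * ((1 + n) ^ 2)⁻¹) ^ 2 * (J * ∫ x, ‖φ x‖ ^ 2) := by
    calc _ ≤ _ := pow_le_pow_left₀ (norm_nonneg _) hA 2
      _ = (C / m ^ 2 * ((1 + n) ^ 2)⁻¹) ^ 2 * (∫ x, w x * ‖φ x‖) ^ 2 := by ring
      _ ≤ _ := by gcongr
  have hnn : n * (((1 + n) ^ 2)⁻¹) ^ 2 ≤ (1 + n ^ 2)⁻¹ := by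
    rw [inv_pow, ← div_eq_mul_inv, ← one_div, div_le_div_iff₀ (by positivity) (by positivity)]
    nlinarith [pow_pos hn0 2, pow_pos hn0 3, pow_pos hn0 4]
  have hs2 : s = -n := by simp [hn]
  rw [show (1 + s ^ 2) = 1 + n ^ 2 by rw [hs2]; ring, neg_mul]
  rw [show ∀ z : ℝ, s * z = -(n * z) by intro z; rw [hs2]; ring]
  refine neg_le_neg ?_
  calc _ ≤ n * ((C / m ^ 2 * ((1 + n) ^ 2)⁻¹) ^ 2 * (J * ∫ x, ‖φ x‖ ^ 2)) := by gcongr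
    _ = (n * (((1 + n) ^ 2)⁻¹) ^ 2) * ((C / m ^ 2) ^ 2 * J * ∫ x, ‖φ x‖ ^ 2) := by ring
    _ ≤ (1 + n ^ 2)⁻¹ * ((C / m ^ 2) ^ 2 * J * ∫ x, ‖φ x‖ ^ 2) := by gcongr
    _ = _ := by ring

/-! ### The Ising kernel -/

/-- The Ising kernel is `cosh θ + cosh η` times a sum of two rank-one kernels. -/
lemma cosh_identity (θ η : ℝ) :
    Real.cosh ((θ + η) / 2) ^ 2 * Real.cosh ((θ - η) / 2) =
      (1 / 2) * (Real.cosh θ + Real.cosh η) *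
        (Real.cosh (θ / 2) * Real.cosh (η / 2) + Real.sinh (θ / 2) * Real.sinh (η / 2)) := by
  rw [add_div, sub_div, ← Real.cosh_add]
  have h1 : Real.cosh θ = Real.cosh ((θ / 2 + η / 2) + (θ / 2 - η / 2)) := by ring_nf
  have h2 : Real.cosh η = Real.cosh ((θ / 2 + η / 2) - (θ / 2 - η / 2)) := by ring_nf
  rw [h1, h2, Real.cosh_add (θ / 2 + η / 2) (θ / 2 - η / 2),
    Real.cosh_sub (θ / 2 + η / 2) (θ / 2 - η / 2)]
  ring

/-- `Q` as an integral over frequencies whose only negative contributions come from `s < 0`. -/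
lemma Qform_eq {μ : ℝ} (hμ : 0 < μ) (g : SchwartzMap ℝ ℝ) {φ : ℝ → ℂ} (hφ : Continuous φ)
    (hs : HasCompactSupport φ) :
    Qform μ (fun θ : ℝ => Real.cosh (θ / 2)) g φ = ((μ *
      ((∫ s : ℝ, s * ‖amp g (fun x => μ / (2 * Real.pi) * Real.cosh x)
        (fun x => (Real.cosh (x / 2) : ℂ) * φ x) s‖ ^ 2) +
      ∫ s : ℝ, s * ‖amp g (fun x => μ / (2 * Real.pi) * Real.cosh x)
        (fun x => (Real.sinh (x / 2) : ℂ) * φ x) s‖ ^ 2) : ℝ) : ℂ) := by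
  have ha : Continuous (fun x => μ / (2 * Real.pi) * Real.cosh x) := by fun_prop
  have hc : Continuous (fun x => (Real.cosh (x / 2) : ℂ) * φ x) := by fun_prop
  have hsh : Continuous (fun x => (Real.sinh (x / 2) : ℂ) * φ x) := by fun_prop
  have hcs : HasCompactSupport (fun x => (Real.cosh (x / 2) : ℂ) * φ x) := hs.mul_left
  have hshs : HasCompactSupport (fun x => (Real.sinh (x / 2) : ℂ) * φ x) := hs.mul_left
  have i1 := integrable_double g ha hc hcs
  have i2 := integrable_double g ha hsh hshs
  have e1 := integral_double g ha hc hcs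
  have e2 := integral_double g ha hsh hshs
  have hpi := Real.pi_pos.ne'
  have key := integral_prod _ ((i1.add i2).const_mul (Real.pi / μ : ℂ))
  rw [integral_const_mul, integral_add' i1 i2, e1, e2] at key
  rw [Qform]
  have : ∀ θ η : ℝ, (((Real.cosh ((θ + η) / 2)) ^ 2 * Real.cosh ((θ - η) / 2) : ℝ) : ℂ) *
        fourierG g (μ * Real.cosh θ - μ * Real.cosh η) * conj (φ θ) * φ η =
      (Real.pi / μ : ℂ) * (((fun p : ℝ × ℝ =>
        ((μ / (2 * Real.pi) * Real.cosh p.1 + μ / (2 * Real.pi) * Real.cosh p.2 : ℝ) : ℂ) *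
      fourierG g (2 * Real.pi * (μ / (2 * Real.pi) * Real.cosh p.1 -
        μ / (2 * Real.pi) * Real.cosh p.2)) * (conj ((Real.cosh (p.1 / 2) : ℂ) * φ p.1) *
          ((Real.cosh (p.2 / 2) : ℂ) * φ p.2))) + (fun p : ℝ × ℝ =>
        ((μ / (2 * Real.pi) * Real.cosh p.1 + μ / (2 * Real.pi) * Real.cosh p.2 : ℝ) : ℂ) *
      fourierG g (2 * Real.pi * (μ / (2 * Real.pi) * Real.cosh p.1 -
        μ / (2 * Real.pi) * Real.cosh p.2)) * (conj ((Real.sinh (p.1 / 2) : ℂ) * φ p.1) *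
          ((Real.sinh (p.2 / 2) : ℂ) * φ p.2)))) (θ, η)) := by
    intro θ η
    have hk : 2 * Real.pi * (μ / (2 * Real.pi) * Real.cosh θ - μ / (2 * Real.pi) * Real.cosh η)
        = μ * Real.cosh θ - μ * Real.cosh η := by field_simp
    have hμC : (μ : ℂ) ≠ 0 := by exact_mod_cast hμ.ne'
    have hpC : (Real.pi : ℂ) ≠ 0 := by exact_mod_cast hpi
    simp only [Pi.add_apply, hk, map_mul, Complex.conj_ofReal]
    rw [cosh_identity]
    push_cast
    field_simp
  simp only [this]
  rw [← key]
  have hμC : (μ : ℂ) ≠ 0 := by exact_mod_cast hμ.ne'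
  have hpC : (Real.pi : ℂ) ≠ 0 := by exact_mod_cast hpi
  push_cast
  field_simp

/-- QEI for the massive Ising model with `P ≡ 1`, where `F_P(θ) = cosh(θ/2)`:
for every real Schwartz `g` there is `c_g > 0` with `Q(φ) ≥ −c_g‖φ‖²` for all smooth
compactly supported `φ`. -/
theorem ising_one_particle_QEI
    (μ : ℝ) (hμ : 0 < μ)
    (g : SchwartzMap ℝ ℝ) :
    ∃ cg : ℝ, 0 < cg ∧
      ∀ φ : ℝ → ℂ, ContDiff ℝ (⊤ : ℕ∞) φ → HasCompactSupport φ →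
        -(cg * ∫ θ : ℝ, ‖φ θ‖ ^ 2) ≤
          (Qform μ (fun θ : ℝ => Real.cosh (θ / 2)) (⇑g) φ).re := by
  have hm : 0 < μ / (2 * Real.pi) := by positivity
  obtain ⟨K, hK0, hK⟩ := amp_bound g hm
  refine ⟨2 * μ * K * Real.pi + 1, by positivity, fun φ hφ hs => ?_⟩
  have hφc := hφ.continuous
  rw [Qform_eq hμ g hφc hs, Complex.ofReal_re]
  have hN : 0 ≤ ∫ x, ‖φ x‖ ^ 2 := integral_nonneg fun x => by positivity
  have hhalf : ∀ x : ℝ, Real.cosh (x / 2) ≤ Real.cosh x := fun x => by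
    rw [Real.cosh_le_cosh, abs_div, abs_two]
    linarith [abs_nonneg x]
  have main : ∀ c : ℝ → ℝ, Continuous c → (∀ x, |c x| ≤ Real.cosh x) →
      -(K * ∫ x, ‖φ x‖ ^ 2) * Real.pi ≤ ∫ s : ℝ, s *
        ‖amp g (fun x => μ / (2 * Real.pi) * Real.cosh x) (fun x => (c x : ℂ) * φ x) s‖ ^ 2 := by
    intro c hcc hc
    have e : -(K * ∫ x, ‖φ x‖ ^ 2) * Real.pi =
        ∫ s : ℝ, -(K * ∫ x, ‖φ x‖ ^ 2) * (1 + s ^ 2)⁻¹ := by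
      rw [integral_const_mul, integral_univ_inv_one_add_sq]
    rw [e]
    refine integral_mono (integrable_inv_one_add_sq.const_mul _)
      (integrable_amp g (by fun_prop) (by fun_prop) hs.mul_left) fun s => hK c hc φ hφc hs s
  have m1 := main (fun x => Real.cosh (x / 2)) (by fun_prop) fun x => by
    rw [abs_of_pos (Real.cosh_pos _)]; exact hhalf x
  have m2 := main (fun x => Real.sinh (x / 2)) (by fun_prop) fun x => by
    rw [Real.abs_sinh]
    exact (Real.sinh_lt_cosh _).le.trans (by rw [Real.cosh_abs]; exact hhalf x)
  have := mul_le_mul_of_nonneg_left (add_le_add m1 m2) hμ.le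
  refine le_trans ?_ this
  nlinarith
end

section
/- (No QEI in the Ising model for nonconstant polynomial P.) Let μ > 0, let P : ℝ → ℝ be a polynomial of degree at least 1 with positive leading coefficient, and set F_P(θ) = P(cosh θ)·cosh(θ/2). Then for every real-valued Schwartz function g on ℝ with g not identically zero, there exists a sequence (φ_j) of smooth compactly supported functions φ_j : ℝ → ℂ with ‖φ_j‖_{L²(ℝ)} = 1 such that Q(φ_j) → −∞ as j → ∞. -/
/-!
Let `K(θ, η) = cosh²((θ+η)/2) F_P(θ-η) Re G(ω(θ)-ω(η))` be the real part of the kernel. The test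
states are normalized differences `b₊ - b₋` of nonnegative bumps of width `δ = ε e^{-R}` centred at
`R` and `-R`, with `ε` fixed and `R` large.

* If both points lie near the same centre, `|θ - η| ≤ 2`, so `F_P(θ-η)` is bounded and
  `|K| ≤ A e^{2R}` (`kernel_diag`).
* If they lie near opposite centres, `ω(θ) - ω(η)` is small: `ω` has slope of order `e^R` there,
  which is compensated by the width `δ`. Hence `Re G ≥ G(0)/2 > 0`. Because `P` grows at least
  linearly, `F_P(θ-η)` is at least of order `e^{3R}`, so `K ≥ B e^{3R}` (`kernel_cross`).

The cross terms enter with a minus sign and dominate, and normalization contributes a factor of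
order `1/δ` against the `δ²` from the integrals of the bumps (`exists_state`). This gives
`Q ≲ -δ e^{3R} ∼ -e^{2R}`.
-/

open MeasureTheory

/-- Real part of the kernel of the quadratic form. -/
noncomputable def reKernel (μ : ℝ) (FP g : ℝ → ℝ) (p : ℝ × ℝ) : ℝ :=
  Real.cosh ((p.1 + p.2) / 2) ^ 2 * FP (p.1 - p.2) *
    (fourierG g (μ * Real.cosh p.1 - μ * Real.cosh p.2)).re

lemma schwartz_sq_integrable (g : SchwartzMap ℝ ℝ) : Integrable (fun t => (g t) ^ 2) :=
  (g.memLp 2).integrable_sq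

lemma norm_fourierG_integrand (g : ℝ → ℝ) (k t : ℝ) :
    ‖((g t : ℂ)) ^ 2 * Complex.exp (Complex.I * (k : ℂ) * (t : ℂ))‖ = (g t) ^ 2 := by
  have h : Complex.I * (k : ℂ) * (t : ℂ) = ((k * t : ℝ) : ℂ) * Complex.I := by
    push_cast; ring
  rw [h, norm_mul, Complex.norm_exp_ofReal_mul_I, mul_one, norm_pow, Complex.norm_real,
    Real.norm_eq_abs, sq_abs]

lemma norm_fourierG_le (g : SchwartzMap ℝ ℝ) (k : ℝ) : ‖fourierG g k‖ ≤ ∫ t, (g t) ^ 2 := by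
  unfold fourierG
  refine (norm_integral_le_integral_norm _).trans (le_of_eq ?_)
  simp_rw [norm_fourierG_integrand]

lemma fourierG_zero (g : ℝ → ℝ) : fourierG g 0 = ((∫ t, (g t) ^ 2 : ℝ) : ℂ) := by
  unfold fourierG
  rw [← integral_complex_ofReal]
  congr 1; ext t; simp

lemma integral_sq_pos (g : SchwartzMap ℝ ℝ) (hg : ⇑g ≠ 0) : 0 < ∫ t, (g t) ^ 2 := by
  obtain ⟨x, hx⟩ := Function.ne_iff.1 hg
  have hc : Continuous fun t => (g t) ^ 2 := g.continuous.pow 2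
  exact integral_pos_of_integrable_nonneg_nonzero hc (schwartz_sq_integrable g)
    (fun t => sq_nonneg _) (x := x) (pow_ne_zero 2 hx)

lemma exists_fourierG_lower (g : SchwartzMap ℝ ℝ) (hg : ⇑g ≠ 0) :
    ∃ κ > 0, ∀ k, |k| < κ → (∫ t, (g t) ^ 2) / 2 ≤ (fourierG g k).re := by
  have hpos := integral_sq_pos g hg
  have hc : Continuous fun k => (fourierG g k).re :=
    Complex.continuous_re.comp (continuous_fourierG g)
  have h0 : (fourierG g 0).re = ∫ t, (g t) ^ 2 := by rw [fourierG_zero, Complex.ofReal_re]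
  have hev : ∀ᶠ k in nhds (0 : ℝ), (∫ t, (g t) ^ 2) / 2 < (fourierG g k).re :=
    hc.continuousAt.eventually (lt_mem_nhds (by simp only [h0]; linarith))
  obtain ⟨κ, hκ, h⟩ := Metric.eventually_nhds_iff.1 hev
  exact ⟨κ, hκ, fun k hk => (h (by simpa [Real.dist_eq] using hk)).le⟩

/-- At least linear growth of `P`, the only consequence of the degree and leading coefficient
assumptions that is needed. -/
lemma exists_poly_lower (P : Polynomial ℝ) (hdeg : 1 ≤ P.natDegree) (hlead : 0 < P.leadingCoeff) :
    ∃ c > 0, ∃ X, ∀ x ≥ X, c * x ≤ P.eval x := by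
  refine ⟨P.leadingCoeff / 2, by positivity, ?_⟩
  have h := P.isEquivalent_atTop_lead.isLittleO.def (c := 1 / 2) (by norm_num)
  obtain ⟨X, hX⟩ := Filter.eventually_atTop.1 h
  refine ⟨max X 1, fun x hx => ?_⟩
  have hx1 : 1 ≤ x := (le_max_right _ _).trans hx
  have h1 := hX x ((le_max_left _ _).trans hx)
  have hpow : x ≤ x ^ P.natDegree := le_self_pow₀ hx1 (by lia)
  have hpos : 0 ≤ P.leadingCoeff * x ^ P.natDegree := by positivity
  rw [Pi.sub_apply, Real.norm_eq_abs, Real.norm_eq_abs, abs_of_nonneg hpos] at h1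
  have h2 := (abs_le.1 h1).1
  have h3 := mul_le_mul_of_nonneg_left hpow hlead.le
  linarith

lemma cosh_le_exp_abs (x : ℝ) : Real.cosh x ≤ Real.exp |x| := by
  rw [← Real.cosh_abs, Real.cosh_eq]
  have : Real.exp (-|x|) ≤ Real.exp |x| := Real.exp_le_exp.2 (by linarith [abs_nonneg x])
  linarith

lemma half_exp_le_cosh (x : ℝ) : Real.exp x / 2 ≤ Real.cosh x := by
  rw [Real.cosh_eq]
  have := Real.exp_pos (-x)
  linarith

lemma abs_cosh_sub_le {R a b : ℝ} (ha : |a| ≤ R) (hb : |b| ≤ R) :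
    |Real.cosh a - Real.cosh b| ≤ Real.exp R * |a - b| := by
  have := Convex.norm_image_sub_le_of_norm_deriv_le (f := Real.cosh) (s := Set.Icc (-R) R)
    (C := Real.exp R) (x := b) (y := a) (fun x _ => Real.differentiable_cosh x)
    (fun x hx => ?_) (convex_Icc _ _) (abs_le.1 hb) (abs_le.1 ha)
  · simpa [Real.norm_eq_abs] using this
  · have h1 : |Real.sinh x| ≤ Real.cosh x := by
      rw [abs_le]
      constructor
      · have := Real.cosh_add_sinh x; have := Real.exp_pos x; linarith
      · exact (Real.sinh_lt_cosh x).le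
    simp only [Real.deriv_cosh, Real.norm_eq_abs]
    exact h1.trans ((cosh_le_exp_abs x).trans (Real.exp_le_exp.2 (abs_le.2 hx)))

/-- For points near a common centre `s = ±R` the kernel is at most of order `e^{2R}`. -/
lemma kernel_diag (μ : ℝ) (FP : ℝ → ℝ) (hFP : Continuous FP) (g : SchwartzMap ℝ ℝ) :
    ∃ A > 0, ∀ R s θ η : ℝ, |s| ≤ R → |θ - s| ≤ 1 → |η - s| ≤ 1 →
      reKernel μ FP g (θ, η) ≤ A * Real.exp (2 * R) := by
  obtain ⟨M, hM⟩ := (isCompact_Icc (a := (-2 : ℝ)) (b := 2)).exists_bound_of_continuousOn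
    hFP.continuousOn
  have hM0 : 0 ≤ M := (norm_nonneg _).trans (hM 0 (by simp))
  have hG0 : 0 ≤ ∫ t, (g t) ^ 2 := integral_nonneg fun t => sq_nonneg _
  refine ⟨Real.exp 2 * (M * ∫ t, (g t) ^ 2) + 1, by positivity, ?_⟩
  intro R s θ η hs hθ hη
  rw [abs_le] at hs hθ hη
  have h1 : Real.cosh ((θ + η) / 2) ^ 2 ≤ Real.exp 2 * Real.exp (2 * R) := by
    have : Real.cosh ((θ + η) / 2) ≤ Real.exp (R + 1) :=
      (cosh_le_exp_abs _).trans (Real.exp_le_exp.2 (abs_le.2 ⟨by linarith, by linarith⟩))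
    calc Real.cosh ((θ + η) / 2) ^ 2 ≤ Real.exp (R + 1) ^ 2 := by
          have := (Real.cosh_pos ((θ + η) / 2)).le
          gcongr
      _ = _ := by rw [← Real.exp_nat_mul, ← Real.exp_add]; congr 1; push_cast; ring
  have h2 : |FP (θ - η)| ≤ M := hM _ ⟨by linarith, by linarith⟩
  have h3 : |(fourierG g (μ * Real.cosh θ - μ * Real.cosh η)).re| ≤ ∫ t, (g t) ^ 2 :=
    (Complex.abs_re_le_norm _).trans (norm_fourierG_le g _)
  have hE := Real.exp_pos (2 * R)
  calc reKernel μ FP g (θ, η) ≤ |reKernel μ FP g (θ, η)| := le_abs_self _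
    _ = Real.cosh ((θ + η) / 2) ^ 2 * |FP (θ - η)| *
        |(fourierG g (μ * Real.cosh θ - μ * Real.cosh η)).re| := by
      simp only [reKernel, abs_mul, abs_pow, sq_abs]
    _ ≤ (Real.exp 2 * Real.exp (2 * R)) * M * ∫ t, (g t) ^ 2 := by gcongr
    _ ≤ _ := by nlinarith

/-- For points within `ε e^{-R}` of opposite centres the kernel is at least of order `e^{3R}`. -/
lemma kernel_cross (μ : ℝ) (hμ : 0 < μ) (P : Polynomial ℝ) (hdeg : 1 ≤ P.natDegree)
    (hlead : 0 < P.leadingCoeff) (g : SchwartzMap ℝ ℝ) (hg : ⇑g ≠ 0) :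
    ∃ B > 0, ∃ ε > 0, ε ≤ 1 ∧ ∃ R₀ ≥ 0, ∀ R ≥ R₀, ∀ θ η : ℝ,
      |θ - R| ≤ ε * Real.exp (-R) → |η - (-R)| ≤ ε * Real.exp (-R) →
      B * Real.exp (3 * R) ≤
          reKernel μ (fun u => P.eval (Real.cosh u) * Real.cosh (u / 2)) g (θ, η) ∧
        B * Real.exp (3 * R) ≤
          reKernel μ (fun u => P.eval (Real.cosh u) * Real.cosh (u / 2)) g (η, θ) := by
  obtain ⟨κ, hκ, hG⟩ := exists_fourierG_lower g hg
  obtain ⟨c, hc, X, hP⟩ := exists_poly_lower P hdeg hlead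
  have hI := integral_sq_pos g hg
  set I := ∫ t, (g t) ^ 2
  -- `ω(θ) - ω(η)` is at most `2 e μ ε` on the supports considered.
  refine ⟨c / 4 * Real.exp (-3) * (I / 2), by positivity,
    min 1 (κ / (4 * Real.exp 1 * μ)), by positivity, min_le_left _ _, max 0 (X + 1),
    le_max_left _ _, ?_⟩
  intro R hR θ η hθ hη
  set ε := min 1 (κ / (4 * Real.exp 1 * μ)) with hε
  have hε0 : 0 < ε := by rw [hε]; positivity
  have hR0 : 0 ≤ R := (le_max_left _ _).trans hR
  have hRX : X + 1 ≤ R := (le_max_right _ _).trans hR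
  have hδ1 : ε * Real.exp (-R) ≤ 1 := by
    have h1 : ε ≤ 1 := min_le_left _ _
    have h2 : Real.exp (-R) ≤ 1 := Real.exp_le_one_iff.2 (by linarith)
    have := Real.exp_pos (-R)
    nlinarith
  have hθ' := abs_le.1 hθ
  have hη' := abs_le.1 hη
  have hω : |μ * Real.cosh θ - μ * Real.cosh η| < κ := by
    have h1 : |Real.cosh θ - Real.cosh (-η)| ≤ Real.exp (R + 1) * |θ - -η| :=
      abs_cosh_sub_le (abs_le.2 ⟨by linarith, by linarith⟩) (abs_le.2 ⟨by linarith, by linarith⟩)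
    have h2 : |θ - -η| ≤ 2 * (ε * Real.exp (-R)) := abs_le.2 ⟨by linarith, by linarith⟩
    have h3 : Real.exp (R + 1) * (2 * (ε * Real.exp (-R))) = 2 * Real.exp 1 * ε := by
      rw [Real.exp_add, Real.exp_neg]; field_simp
    have h4 : ε * (4 * Real.exp 1 * μ) ≤ κ := by
      rw [← le_div_iff₀ (by positivity)]; exact min_le_right _ _
    rw [← mul_sub, abs_mul, abs_of_pos hμ]
    rw [Real.cosh_neg] at h1
    have h5 : |Real.cosh θ - Real.cosh η| ≤ 2 * Real.exp 1 * ε :=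
      h1.trans ((mul_le_mul_of_nonneg_left h2 (Real.exp_pos _).le).trans h3.le)
    have h6 := mul_le_mul_of_nonneg_left h5 hμ.le
    linarith
  have hF : c / 4 * Real.exp (-3) * Real.exp (3 * R) ≤
      P.eval (Real.cosh (θ - η)) * Real.cosh ((θ - η) / 2) := by
    have hu : 2 * (R - 1) ≤ θ - η := by linarith
    have h1 : Real.exp (2 * (R - 1)) / 2 ≤ Real.cosh (θ - η) :=
      (div_le_div_of_nonneg_right (Real.exp_le_exp.2 hu) (by norm_num)).trans (half_exp_le_cosh _)
    have h2 : Real.exp (R - 1) / 2 ≤ Real.cosh ((θ - η) / 2) :=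
      (div_le_div_of_nonneg_right (Real.exp_le_exp.2 (by linarith)) (by norm_num)).trans
        (half_exp_le_cosh _)
    have h3 : X ≤ Real.cosh (θ - η) := by
      have h := Real.add_one_le_exp (2 * (R - 1))
      have h' := Real.one_le_cosh (θ - η)
      by_cases hX : X ≤ 1
      · linarith
      · nlinarith [Real.add_one_le_exp (R - 1), Real.exp_pos (R - 1),
          (by rw [← Real.exp_nat_mul]; push_cast; rfl :
            Real.exp (R - 1) ^ 2 = Real.exp (2 * (R - 1)))]
    calc c / 4 * Real.exp (-3) * Real.exp (3 * R)
        = c * (Real.exp (2 * (R - 1)) / 2) * (Real.exp (R - 1) / 2) := by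
          have : Real.exp (-3) * Real.exp (3 * R) = Real.exp (2 * (R - 1)) * Real.exp (R - 1) := by
            rw [← Real.exp_add, ← Real.exp_add]; congr 1; ring
          linear_combination c / 4 * this
      _ ≤ c * Real.cosh (θ - η) * Real.cosh ((θ - η) / 2) := by gcongr
      _ ≤ _ := by
          have := (Real.cosh_pos ((θ - η) / 2)).le
          gcongr
          exact hP _ h3
  have hFpos : 0 ≤ P.eval (Real.cosh (θ - η)) * Real.cosh ((θ - η) / 2) :=
    le_trans (by positivity) hF
  have hC : 1 ≤ Real.cosh ((θ + η) / 2) ^ 2 := one_le_pow₀ (Real.one_le_cosh _)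
  have key : ∀ y : ℝ, I / 2 ≤ y → c / 4 * Real.exp (-3) * (I / 2) * Real.exp (3 * R) ≤
      Real.cosh ((θ + η) / 2) ^ 2 *
        (P.eval (Real.cosh (θ - η)) * Real.cosh ((θ - η) / 2)) * y := by
    intro y hy
    calc c / 4 * Real.exp (-3) * (I / 2) * Real.exp (3 * R)
        = 1 * (c / 4 * Real.exp (-3) * Real.exp (3 * R)) * (I / 2) := by ring
      _ ≤ _ := by gcongr
  constructor
  · exact key _ (hG _ hω)
  · have e1 : η - θ = -(θ - η) := by ring
    have e2 : (η - θ) / 2 = -((θ - η) / 2) := by ring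
    have := key _ (hG _ (by rwa [abs_sub_comm] at hω :
      |μ * Real.cosh η - μ * Real.cosh θ| < κ))
    simp only [reKernel]
    rw [e2, e1, Real.cosh_neg, Real.cosh_neg, add_comm η θ]
    exact this

lemma continuous_reKernel (μ : ℝ) (FP : ℝ → ℝ) (hFP : Continuous FP) (g : SchwartzMap ℝ ℝ) :
    Continuous (reKernel μ FP g) := by
  have := continuous_fourierG g
  unfold reKernel
  fun_prop

/-- The quadratic form on real states, as a single integral over the plane. -/
lemma Qform_re_s5 (μ : ℝ) (FP : ℝ → ℝ) (hFP : Continuous FP) (g : SchwartzMap ℝ ℝ)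
    (f : ℝ → ℝ) (hf : Continuous f) (hfs : HasCompactSupport f) (N : ℝ) :
    (Qform μ FP g (fun θ => ((N * f θ : ℝ) : ℂ))).re =
      μ ^ 2 / (2 * Real.pi) * (N ^ 2 * ∫ p : ℝ × ℝ, reKernel μ FP g p * (f p.1 * f p.2)) := by
  have hGc := continuous_fourierG g
  set H : ℝ × ℝ → ℂ := fun p =>
    (((Real.cosh ((p.1 + p.2) / 2)) ^ 2 * FP (p.1 - p.2) : ℝ) : ℂ) *
        fourierG g (μ * Real.cosh p.1 - μ * Real.cosh p.2) *
        (starRingEnd ℂ) ((N * f p.1 : ℝ) : ℂ) * ((N * f p.2 : ℝ) : ℂ) with hH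
  have hHc : Continuous H := by
    simp only [hH, Complex.conj_ofReal]
    fun_prop
  have hHi : Integrable H (volume.prod volume) := by
    refine hHc.integrable_of_hasCompactSupport
      (HasCompactSupport.intro (hfs.isCompact.prod hfs.isCompact) ?_)
    rintro ⟨x, y⟩ hxy
    rw [Set.mem_prod, not_and_or] at hxy
    rcases hxy with h | h
    · simp [hH, image_eq_zero_of_notMem_tsupport h]
    · simp [hH, image_eq_zero_of_notMem_tsupport h]
  have h1 : (∫ θ : ℝ, ∫ η : ℝ, H (θ, η)) = ∫ p, H p := (integral_prod H hHi).symm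
  have h2 : (∫ p, H p).re = ∫ p, (H p).re := (integral_re hHi).symm
  have h3 : ∀ p, (H p).re = N ^ 2 * (reKernel μ FP g p * (f p.1 * f p.2)) := by
    intro p
    simp only [hH, Complex.conj_ofReal, Complex.re_mul_ofReal, Complex.re_ofReal_mul, reKernel]
    ring
  unfold Qform
  rw [Complex.re_ofReal_mul]
  change _ * (∫ θ : ℝ, ∫ η : ℝ, H (θ, η)).re = _
  rw [h1, h2]
  simp_rw [h3]
  rw [integral_const_mul]

/-- If the kernel is at most `a` near each of the two centres and at least `b` between them, a
normalized difference of two bumps of width `δ` has energy at most `-δ (b - 4a) / 2`, up to the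
positive prefactor. -/
lemma exists_state (μ : ℝ) (FP : ℝ → ℝ) (hFP : Continuous FP) (g : SchwartzMap ℝ ℝ)
    (R δ a b : ℝ) (hδ : 0 < δ) (hδR : δ < R) (ha : 0 ≤ a) (hb : 0 ≤ b) (hab : 4 * a ≤ b)
    (h₁ : ∀ θ η, |θ - R| ≤ δ → |η - R| ≤ δ → reKernel μ FP g (θ, η) ≤ a)
    (h₂ : ∀ θ η, |θ - (-R)| ≤ δ → |η - (-R)| ≤ δ → reKernel μ FP g (θ, η) ≤ a)
    (h₃ : ∀ θ η, |θ - R| ≤ δ → |η - (-R)| ≤ δ →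
      b ≤ reKernel μ FP g (θ, η) ∧ b ≤ reKernel μ FP g (η, θ)) :
    ∃ φ : ℝ → ℂ, ContDiff ℝ (⊤ : ℕ∞) φ ∧ HasCompactSupport φ ∧ (∫ θ, ‖φ θ‖ ^ 2) = 1 ∧
      (Qform μ FP g φ).re ≤ -(μ ^ 2 / (2 * Real.pi) * ((b - 4 * a) * δ / 2)) := by
  let u : ContDiffBump (R : ℝ) := ⟨δ / 2, δ, by linarith, by linarith⟩
  let v : ContDiffBump (-R : ℝ) := ⟨δ / 2, δ, by linarith, by linarith⟩
  have hu0 : ∀ x, δ ≤ |x - R| → u x = 0 := fun x hx =>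
    u.zero_of_le_dist (by rwa [Real.dist_eq])
  have hv0 : ∀ x, δ ≤ |x - (-R)| → v x = 0 := fun x hx =>
    v.zero_of_le_dist (by rwa [Real.dist_eq])
  have huc : Continuous u := u.continuous
  have hvc : Continuous v := v.continuous
  have hui : Integrable u := u.integrable
  have hvi : Integrable v := v.integrable
  have hvol : ∀ c r : ℝ, 0 ≤ r → volume.real (Metric.closedBall c r) = 2 * r := by
    intro c r hr
    rw [Measure.real, Real.volume_closedBall, ENNReal.toReal_ofReal (by linarith)]
  have hul : δ ≤ ∫ x, u x := by
    have := u.measure_closedBall_le_integral volume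
    rw [hvol _ _ u.rIn_pos.le] at this
    change 2 * (δ / 2) ≤ _ at this
    linarith
  have hvl : δ ≤ ∫ x, v x := by
    have := v.measure_closedBall_le_integral volume
    rw [hvol _ _ v.rIn_pos.le] at this
    change 2 * (δ / 2) ≤ _ at this
    linarith
  have huu : ∫ x, u x ≤ 2 * δ := by
    have := u.integral_le_measure_closedBall (μ := volume)
    rwa [hvol _ _ u.rOut_pos.le] at this
  have hvu : ∫ x, v x ≤ 2 * δ := by
    have := v.integral_le_measure_closedBall (μ := volume)
    rwa [hvol _ _ v.rOut_pos.le] at this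
  set f : ℝ → ℝ := fun x => u x - v x with hf
  have hfc : Continuous f := huc.sub hvc
  have hfs : HasCompactSupport f := u.hasCompactSupport.sub v.hasCompactSupport
  have hfsm : ContDiff ℝ (⊤ : ℕ∞) f := u.contDiff.sub v.contDiff
  have hf2s : HasCompactSupport fun x => f x ^ 2 :=
    hfs.comp_left (g := fun y : ℝ => y ^ 2) (by simp)
  have hf2i : Integrable fun x => f x ^ 2 :=
    (hfc.pow 2).integrable_of_hasCompactSupport hf2s
  have hD0 : 0 < ∫ x, f x ^ 2 := by
    refine integral_pos_of_integrable_nonneg_nonzero (hfc.pow 2) hf2i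
      (fun x => sq_nonneg _) (x := R) ?_
    have h1 : u R = 1 := u.one_of_mem_closedBall (Metric.mem_closedBall_self u.rIn_pos.le)
    have h2 : v R = 0 := hv0 R (by rw [abs_of_pos (by linarith)]; linarith)
    simp [hf, h1, h2]
  have hD1 : ∫ x, f x ^ 2 ≤ 4 * δ := by
    calc ∫ x, f x ^ 2 ≤ ∫ x, (u x + v x) := by
          refine integral_mono hf2i (hui.add hvi) fun x => ?_
          have := u.nonneg (x := x)
          have := v.nonneg (x := x)
          have := u.le_one (x := x)
          have := v.le_one (x := x)
          simp only [hf]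
          nlinarith [mul_nonneg (u.nonneg (x := x)) (v.nonneg (x := x))]
      _ = (∫ x, u x) + ∫ x, v x := integral_add hui hvi
      _ ≤ 4 * δ := by linarith
  set D := ∫ x, f x ^ 2
  have hN2 : (Real.sqrt D)⁻¹ ^ 2 = D⁻¹ := by rw [inv_pow, Real.sq_sqrt hD0.le]
  have hKc := continuous_reKernel μ FP hFP g
  have hI : ∫ p : ℝ × ℝ, reKernel μ FP g p * (f p.1 * f p.2) ≤ -(2 * (b - 4 * a) * δ ^ 2) := by
    have hint : Integrable (fun p : ℝ × ℝ => reKernel μ FP g p * (f p.1 * f p.2)) := by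
      refine Continuous.integrable_of_hasCompactSupport (by fun_prop)
        (HasCompactSupport.intro (hfs.isCompact.prod hfs.isCompact) ?_)
      rintro ⟨x, y⟩ hxy
      rw [Set.mem_prod, not_and_or] at hxy
      rcases hxy with h | h
      · simp [image_eq_zero_of_notMem_tsupport h]
      · simp [image_eq_zero_of_notMem_tsupport h]
    have iuu : Integrable (fun p : ℝ × ℝ => u p.1 * u p.2) := hui.mul_prod hui
    have ivv : Integrable (fun p : ℝ × ℝ => v p.1 * v p.2) := hvi.mul_prod hvi
    have iuv : Integrable (fun p : ℝ × ℝ => u p.1 * v p.2) := hui.mul_prod hvi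
    have ivu : Integrable (fun p : ℝ × ℝ => v p.1 * u p.2) := hvi.mul_prod hui
    have hpt : ∀ p : ℝ × ℝ, reKernel μ FP g p * (f p.1 * f p.2) ≤
        a * (u p.1 * u p.2 + v p.1 * v p.2) - b * (u p.1 * v p.2 + v p.1 * u p.2) := by
      rintro ⟨x, y⟩
      have t1 : reKernel μ FP g (x, y) * (u x * u y) ≤ a * (u x * u y) := by
        by_cases hx : δ ≤ |x - R|
        · simp [hu0 x hx]
        by_cases hy : δ ≤ |y - R|
        · simp [hu0 y hy]
        exact mul_le_mul_of_nonneg_right (h₁ x y (not_le.1 hx).le (not_le.1 hy).le)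
          (mul_nonneg u.nonneg u.nonneg)
      have t2 : reKernel μ FP g (x, y) * (v x * v y) ≤ a * (v x * v y) := by
        by_cases hx : δ ≤ |x - (-R)|
        · simp [hv0 x hx]
        by_cases hy : δ ≤ |y - (-R)|
        · simp [hv0 y hy]
        exact mul_le_mul_of_nonneg_right (h₂ x y (not_le.1 hx).le (not_le.1 hy).le)
          (mul_nonneg v.nonneg v.nonneg)
      have t3 : b * (u x * v y) ≤ reKernel μ FP g (x, y) * (u x * v y) := by
        by_cases hx : δ ≤ |x - R|
        · simp [hu0 x hx]
        by_cases hy : δ ≤ |y - (-R)|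
        · simp [hv0 y hy]
        exact mul_le_mul_of_nonneg_right (h₃ x y (not_le.1 hx).le (not_le.1 hy).le).1
          (mul_nonneg u.nonneg v.nonneg)
      have t4 : b * (v x * u y) ≤ reKernel μ FP g (x, y) * (v x * u y) := by
        by_cases hx : δ ≤ |x - (-R)|
        · simp [hv0 x hx]
        by_cases hy : δ ≤ |y - R|
        · simp [hu0 y hy]
        exact mul_le_mul_of_nonneg_right (h₃ y x (not_le.1 hy).le (not_le.1 hx).le).2
          (mul_nonneg v.nonneg u.nonneg)
      simp only [hf]
      linarith
    have euu : ∫ p : ℝ × ℝ, u p.1 * u p.2 = (∫ x, u x) * ∫ x, u x := integral_prod_mul _ _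
    have evv : ∫ p : ℝ × ℝ, v p.1 * v p.2 = (∫ x, v x) * ∫ x, v x := integral_prod_mul _ _
    have euv : ∫ p : ℝ × ℝ, u p.1 * v p.2 = (∫ x, u x) * ∫ x, v x := integral_prod_mul _ _
    have evu : ∫ p : ℝ × ℝ, v p.1 * u p.2 = (∫ x, v x) * ∫ x, u x := integral_prod_mul _ _
    refine (integral_mono hint (((iuu.add ivv).const_mul a).sub ((iuv.add ivu).const_mul b))
      hpt).trans ?_
    refine (integral_sub ((iuu.add ivv).const_mul a) ((iuv.add ivu).const_mul b)).trans_le ?_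
    rw [integral_const_mul, integral_const_mul]
    simp only [Pi.add_apply]
    rw [integral_add iuu ivv, integral_add iuv ivu, euu, evv, euv, evu]
    have m1 : (∫ x, u x) * ∫ x, u x ≤ 2 * δ * (2 * δ) := by
      apply mul_le_mul huu huu <;> linarith
    have m2 : (∫ x, v x) * ∫ x, v x ≤ 2 * δ * (2 * δ) := by
      apply mul_le_mul hvu hvu <;> linarith
    have m3 : δ * δ ≤ (∫ x, u x) * ∫ x, v x := by
      apply mul_le_mul hul hvl <;> linarith
    have m4 := mul_le_mul_of_nonneg_left (add_le_add m1 m2) ha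
    have m5 := mul_le_mul_of_nonneg_left m3 hb
    linarith
  refine ⟨fun θ => (((Real.sqrt D)⁻¹ * f θ : ℝ) : ℂ), ?_, ?_, ?_, ?_⟩
  · exact Complex.ofRealCLM.contDiff.comp (contDiff_const.mul hfsm)
  · exact hfs.comp_left (g := fun y : ℝ => (((Real.sqrt D)⁻¹ * y : ℝ) : ℂ)) (by simp)
  · have : ∀ θ, ‖(((Real.sqrt D)⁻¹ * f θ : ℝ) : ℂ)‖ ^ 2 = D⁻¹ * f θ ^ 2 := by
      intro θ
      rw [Complex.norm_real, Real.norm_eq_abs, sq_abs, mul_pow, hN2]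
    simp_rw [this]
    rw [integral_const_mul]
    exact inv_mul_cancel₀ hD0.ne'
  · rw [Qform_re_s5 μ FP hFP g f hfc hfs, hN2, ← mul_neg]
    have hba : 0 ≤ b - 4 * a := by linarith
    gcongr
    rw [inv_mul_le_iff₀ hD0]
    have : D * ((b - 4 * a) * δ / 2) ≤ 4 * δ * ((b - 4 * a) * δ / 2) := by gcongr
    linarith

/-- No QEI in the Ising model for nonconstant polynomial `P`: with
`F_P(θ) = P(cosh θ)·cosh(θ/2)`, `deg P ≥ 1`, positive leading coefficient, for every
nonzero real Schwartz `g` there are normalized smooth compactly supported states with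
energy density expectation tending to `−∞`. -/
theorem ising_no_QEI_nonconstant_P
    (μ : ℝ) (hμ : 0 < μ)
    (P : Polynomial ℝ) (hdeg : 1 ≤ P.natDegree) (hlead : 0 < P.leadingCoeff)
    (g : SchwartzMap ℝ ℝ) (hg : ⇑g ≠ 0) :
    ∃ φ : ℕ → ℝ → ℂ,
      (∀ j, ContDiff ℝ (⊤ : ℕ∞) (φ j) ∧ HasCompactSupport (φ j) ∧
        (∫ θ : ℝ, ‖φ j θ‖ ^ 2) = 1) ∧
      Filter.Tendsto
        (fun j => (Qform μ (fun θ : ℝ => P.eval (Real.cosh θ) * Real.cosh (θ / 2))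
          (⇑g) (φ j)).re) Filter.atTop Filter.atBot := by
  have hFP : Continuous fun θ : ℝ => P.eval (Real.cosh θ) * Real.cosh (θ / 2) := by fun_prop
  obtain ⟨A, hA, hdiag⟩ := kernel_diag μ _ hFP g
  obtain ⟨B, hB, ε, hε, hε1, R₀, hR₀, hcross⟩ := kernel_cross μ hμ P hdeg hlead g hg
  suffices h : ∀ j : ℕ, ∃ φ : ℝ → ℂ, (ContDiff ℝ (⊤ : ℕ∞) φ ∧ HasCompactSupport φ ∧
      (∫ θ : ℝ, ‖φ θ‖ ^ 2) = 1) ∧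
      (Qform μ (fun θ : ℝ => P.eval (Real.cosh θ) * Real.cosh (θ / 2)) g φ).re ≤ -(j : ℝ) by
    choose φ h1 h2 using h
    exact ⟨φ, h1, Filter.tendsto_atBot_mono h2
      (Filter.tendsto_neg_atTop_atBot.comp tendsto_natCast_atTop_atTop)⟩
  intro j
  have hp : 0 < μ ^ 2 / (2 * Real.pi) := by positivity
  set p := μ ^ 2 / (2 * Real.pi)
  -- `R` is so large that `b - 4a ≥ b/2` and `p δ b / 4 = p ε B e^{2R} / 4 ≥ j`.
  obtain ⟨R, hR0, hR1, hRA, hRj⟩ : ∃ R : ℝ, R₀ ≤ R ∧ 1 < R ∧ 8 * A / B ≤ R ∧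
      4 * j / (p * ε * B) ≤ R :=
    ((Filter.eventually_ge_atTop R₀).and ((Filter.eventually_gt_atTop 1).and
      ((Filter.eventually_ge_atTop _).and (Filter.eventually_ge_atTop _)))).exists
  have hδ1 : ε * Real.exp (-R) ≤ 1 := by
    have h2 : Real.exp (-R) ≤ 1 := Real.exp_le_one_iff.2 (by linarith)
    have := Real.exp_pos (-R)
    nlinarith
  have hE2 := Real.exp_pos (2 * R)
  have h3 : Real.exp (3 * R) = Real.exp R * Real.exp (2 * R) := by
    rw [← Real.exp_add]; congr 1; ring
  have hRE := Real.add_one_le_exp R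
  have hab : 8 * (A * Real.exp (2 * R)) ≤ B * Real.exp (3 * R) := by
    rw [div_le_iff₀ hB] at hRA
    rw [h3]
    have : 8 * A ≤ B * Real.exp R := by nlinarith
    nlinarith
  obtain ⟨φ, c1, c2, c3, c4⟩ := exists_state μ _ hFP g R (ε * Real.exp (-R))
    (A * Real.exp (2 * R)) (B * Real.exp (3 * R)) (by positivity) (by linarith)
    (by positivity) (by positivity) (by have : 0 ≤ A * Real.exp (2 * R) := by positivity
                                        linarith)
    (fun θ η h h' => hdiag R R θ η (abs_of_pos (by linarith)).le (h.trans hδ1) (h'.trans hδ1))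
    (fun θ η h h' => hdiag R (-R) θ η (by rw [abs_neg, abs_of_pos (by linarith)])
      (h.trans hδ1) (h'.trans hδ1))
    (fun θ η h h' => hcross R hR0 θ η h h')
  refine ⟨φ, ⟨c1, c2, c3⟩, c4.trans (neg_le_neg ?_)⟩
  calc (j : ℝ) ≤ R * (p * ε * B) / 4 := by
        rw [div_le_iff₀ (by positivity)] at hRj
        linarith
    _ ≤ Real.exp (2 * R) * (p * ε * B) / 4 := by
        have : R ≤ Real.exp (2 * R) := by linarith [Real.add_one_le_exp (2 * R)]
        gcongr
    _ = p * (B * Real.exp (3 * R) / 2 * (ε * Real.exp (-R)) / 2) := by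
        rw [h3, Real.exp_neg]; field_simp; ring
    _ ≤ p * ((B * Real.exp (3 * R) - 4 * (A * Real.exp (2 * R))) * (ε * Real.exp (-R)) / 2) := by
        gcongr
        linarith
end
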